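/- arXiv:1510.05501 — 3 statements merged into one kernel-verified Lean document; each statement's English description precedes it below -/
import Mathlib

section
/- Let m be a positive integer, let f belong to the class B^(m), and let g belong to X^(s) strictly for some positive integer s, with g(x) > 0 for all large x and g(x) → +∞ as x → ∞. Then the composition φ(x) = f(g(x)) also belongs to the class B^(m). -/
open Filter Finset Real

noncomputable section

/-- `α` has the Poincaré-type asymptotic expansion `α(x) ~ Σ_{i≥0} c_i x^(γ-i)` as `x → ∞`,
which may be differentiated term by term any number of times: `α` is infinitely
differentiable on some `(a, ∞)` with `a > 0`, and for all `j N : ℕ`,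
`α^{(j)}(x) − Σ_{i<N} c_i (γ−i)(γ−i−1)⋯(γ−i−j+1) x^(γ−i−j) = O(x^(γ−N−j))` as `x → ∞`. -/
def HasExpA (γ : ℝ) (c : ℕ → ℝ) (α : ℝ → ℝ) : Prop :=
  (∃ a : ℝ, 0 < a ∧ ∀ x ∈ Set.Ioi a, ContDiffAt ℝ (⊤ : ℕ∞) α x) ∧
  ∀ j N : ℕ,
    (fun x : ℝ => iteratedDeriv j α x -
        ∑ i ∈ Finset.range N,
          c i * (∏ l ∈ Finset.range j, (γ - (i : ℝ) - (l : ℝ))) * x ^ (γ - (i : ℝ) - (j : ℝ)))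
      =O[atTop] fun x : ℝ => x ^ (γ - (N : ℝ) - (j : ℝ))

/-- `α` belongs to the class `A^(γ)`. -/
def MemA (γ : ℝ) (α : ℝ → ℝ) : Prop := ∃ c : ℕ → ℝ, HasExpA γ c α

/-- `α` belongs to the class `A^(γ)` strictly (`c 0 ≠ 0`). -/
def MemAS (γ : ℝ) (α : ℝ → ℝ) : Prop := ∃ c : ℕ → ℝ, c 0 ≠ 0 ∧ HasExpA γ c α

/-- `α` belongs to `X^(γ)` strictly: `α ∈ A^(γ)` strictly and every derivative `α^{(j)}`,
`j ≥ 1`, either vanishes identically for all large `x` or belongs to `A^(γ−j−k)` strictly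
for some nonnegative integer `k`. -/
def MemXS (γ : ℝ) (α : ℝ → ℝ) : Prop :=
  MemAS γ α ∧
  ∀ j : ℕ, 1 ≤ j →
    (∀ᶠ x in atTop, iteratedDeriv j α x = 0) ∨
    ∃ k : ℕ, MemAS (γ - (j : ℝ) - (k : ℝ)) (iteratedDeriv j α)

/-- `f`, infinitely differentiable for all large `x`, belongs to the class `B^(m)`:
`f(x) = Σ_{k=1}^m p_k(x) f^{(k)}(x)` for all large `x`, where for `1 ≤ k ≤ m−1` each `p_k`
either has an empty expansion (all its derivatives are `O(x^{−μ})` for every `μ > 0`) or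
belongs to `A^(i_k)` strictly with `i_k ≤ k` an integer, and `p_m ∈ A^(i_m)` strictly with
`i_m ≤ m` an integer. -/
def MemB (m : ℕ) (f : ℝ → ℝ) : Prop :=
  (∀ᶠ x in atTop, ContDiffAt ℝ (⊤ : ℕ∞) f x) ∧
  ∃ p : ℕ → ℝ → ℝ,
    (∀ᶠ x in atTop, f x = ∑ k ∈ Finset.Icc 1 m, p k x * iteratedDeriv k f x) ∧
    (∀ k ∈ Finset.Icc 1 (m - 1),
      ((∀ᶠ x in atTop, ContDiffAt ℝ (⊤ : ℕ∞) (p k) x) ∧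
        ∀ μ : ℝ, 0 < μ → ∀ j : ℕ,
          (iteratedDeriv j (p k)) =O[atTop] fun x : ℝ => x ^ (-μ)) ∨
      ∃ i : ℤ, i ≤ (k : ℤ) ∧ MemAS (i : ℝ) (p k)) ∧
    ∃ i : ℤ, i ≤ (m : ℤ) ∧ MemAS (i : ℝ) (p m)

/-- The Bell polynomial `B_{n,k}(y_1, …, y_{n−k+1})`. -/
def bellPoly (n k : ℕ) (y : ℕ → ℝ) : ℝ :=
  ∑ j ∈ Finset.univ.filter
      (fun j : Fin (n - k + 1) → Fin (n + 1) =>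
        (∑ i, (j i : ℕ)) = k ∧ (∑ i, (i.1 + 1) * (j i : ℕ)) = n),
    ((n.factorial : ℝ) / ∏ i, ((j i : ℕ).factorial : ℝ)) *
      ∏ i, (y (i.1 + 1) / ((i.1 + 1).factorial : ℝ)) ^ (j i : ℕ)

/-!
Writing `φ = f ∘ g`, the chain rule `φ^{(k)} = g'^k (f^{(k)} ∘ g) + ⋯` is triangular and can be
inverted: `f^{(k)} ∘ g = ∑_{j ≤ k} q_{k,j} φ^{(j)}`, where `q_{k,j} ∈ A^(j-ks)` because
`g' ∈ A^(s-1)` strictly and differentiation lowers the order by one. Substituting this into the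
equation `f = ∑ p_k f^{(k)}` at `g(x)` gives `φ = ∑ P_j φ^{(j)}` with
`P_j = ∑_k (p_k ∘ g) q_{k,j}`. Since `p_k ∘ g ∈ A^(sk)`, the powers of `s` cancel and
`P_j ∈ A^(j)`. The leading coefficient `P_m = (p_m ∘ g) g'^{-m}` is a product of strict members,
of order `s i_m - m (s - 1) ≤ m`.
-/

open Asymptotics Topology
open scoped ContDiff

section Eventually

lemma eventually_atTop_eventually_nhds {X : Type*} [TopologicalSpace X] [LinearOrder X]
    [ClosedIicTopology X] [NoMaxOrder X] [Nonempty X] {p : X → Prop}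
    (h : ∀ᶠ x in atTop, p x) : ∀ᶠ x in atTop, ∀ᶠ y in 𝓝 x, p y := by
  obtain ⟨a, ha⟩ := eventually_atTop.1 h
  filter_upwards [eventually_gt_atTop a] with x hx
  filter_upwards [Ioi_mem_nhds hx] with y hy using ha y (Set.mem_Ioi.1 hy).le

lemma eventuallyEq_atTop_deriv {E : Type*} [NormedAddCommGroup E] [NormedSpace ℝ E]
    {f g : ℝ → E} (h : f =ᶠ[atTop] g) : deriv f =ᶠ[atTop] deriv g :=
  (eventually_atTop_eventually_nhds h).mono fun _ hx => EventuallyEq.deriv_eq hx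

lemma eventuallyEq_atTop_iteratedDeriv {E : Type*} [NormedAddCommGroup E] [NormedSpace ℝ E]
    {f g : ℝ → E} (h : f =ᶠ[atTop] g) (n : ℕ) :
    iteratedDeriv n f =ᶠ[atTop] iteratedDeriv n g :=
  (eventually_atTop_eventually_nhds h).mono fun _ hx => EventuallyEq.iteratedDeriv_eq n hx

lemma deriv_comp_eventuallyEq {l l' : Filter ℝ} {f g : ℝ → ℝ}
    (hf : ∀ᶠ y in l', DifferentiableAt ℝ f y) (hg : ∀ᶠ x in l, DifferentiableAt ℝ g x)
    (h : Tendsto g l l') : deriv (f ∘ g) =ᶠ[l] (deriv f ∘ g) * deriv g := by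
  filter_upwards [h.eventually hf, hg] with x hfx hgx using deriv_comp x hfx hgx

lemma rpow_mul_rpow_eventuallyEq (a b : ℝ) :
    (fun x : ℝ => x ^ a * x ^ b) =ᶠ[atTop] fun x => x ^ (a + b) := by
  filter_upwards [eventually_gt_atTop 0] with x hx using (rpow_add hx a b).symm

lemma iteratedDeriv_rpow_const (r : ℝ) (k : ℕ) :
    iteratedDeriv k (fun x : ℝ => x ^ r) =
      fun x => (descPochhammer ℝ k).eval r * x ^ (r - k) := by
  ext x
  rw [iteratedDeriv_eq_iterate, Real.iter_deriv_rpow_const]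

lemma isBigO_rpow_atTop_of_le {a b : ℝ} (h : a ≤ b) :
    (fun x : ℝ => x ^ a) =O[atTop] fun x => x ^ b := by
  refine IsBigO.of_norm_eventuallyLE ?_
  filter_upwards [eventually_ge_atTop 1] with x hx
  rw [norm_of_nonneg (by positivity)]
  exact rpow_le_rpow_of_exponent_le hx h

end Eventually

/-- The algebra of functions that are infinitely differentiable at all large `x`. -/
def eventuallySmooth : Subalgebra ℝ (ℝ → ℝ) where
  carrier := {f | ∀ᶠ x in atTop, ContDiffAt ℝ ∞ f x}
  add_mem' hf hg := by
    filter_upwards [hf, hg] with x hfx hgx using hfx.add hgx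
  mul_mem' hf hg := by
    filter_upwards [hf, hg] with x hfx hgx using hfx.mul hgx
  algebraMap_mem' _ := Eventually.of_forall fun _ => contDiffAt_const

section EventuallySmooth

variable {f g : ℝ → ℝ}

lemma mem_eventuallySmooth_congr (h : f =ᶠ[atTop] g) (hf : f ∈ eventuallySmooth) :
    g ∈ eventuallySmooth := by
  filter_upwards [hf, eventually_atTop_eventually_nhds h] with x hfx hx
  exact hfx.congr_of_eventuallyEq (EventuallyEq.symm hx)

lemma differentiableAt_of_mem_eventuallySmooth (hf : f ∈ eventuallySmooth) :
    ∀ᶠ x in atTop, DifferentiableAt ℝ f x :=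
  hf.mono fun _ hx => hx.differentiableAt (by simp)

lemma deriv_mem_eventuallySmooth (hf : f ∈ eventuallySmooth) : deriv f ∈ eventuallySmooth :=
  hf.mono fun _ hx => hx.derivWithin (by norm_cast)

lemma iteratedDeriv_mem_eventuallySmooth (hf : f ∈ eventuallySmooth) (n : ℕ) :
    iteratedDeriv n f ∈ eventuallySmooth := by
  induction n with
  | zero => simpa using hf
  | succ n ih => exact iteratedDeriv_succ (f := f) ▸ deriv_mem_eventuallySmooth ih

lemma inv_mem_eventuallySmooth (hf : f ∈ eventuallySmooth) (h : ∀ᶠ x in atTop, f x ≠ 0) :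
    f⁻¹ ∈ eventuallySmooth := by
  filter_upwards [hf, h] with x hfx hx using hfx.inv hx

lemma comp_mem_eventuallySmooth (hf : f ∈ eventuallySmooth) (hg : g ∈ eventuallySmooth)
    (h : Tendsto g atTop atTop) : f ∘ g ∈ eventuallySmooth := by
  filter_upwards [h.eventually hf, hg] with x hfx hgx using hfx.comp x hgx

lemma rpow_mem_eventuallySmooth (γ : ℝ) : (fun x : ℝ => x ^ γ) ∈ eventuallySmooth := by
  filter_upwards [eventually_ne_atTop 0] with x hx using contDiffAt_rpow_const_of_ne hx

end EventuallySmooth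

/-- Symbols of order `μ`, tested on the derivatives of order at most `n`: the eventually smooth
`f` with `f^{(j)}(x) = O(x^(μ-j))` for all `j ≤ n`. The full symbol class is `n = ⊤`; finite `n`
make induction on the number of derivatives possible. -/
def symbolClass (n : ℕ∞) (μ : ℝ) : Submodule ℝ (ℝ → ℝ) where
  carrier := {f | f ∈ eventuallySmooth ∧
    ∀ j : ℕ, j ≤ n → iteratedDeriv j f =O[atTop] fun x => x ^ (μ - j)}
  zero_mem' := ⟨zero_mem _, fun j _ => (isBigO_zero _ _).congr_left fun x => by simp⟩
  add_mem' {f g} hf hg := by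
    refine ⟨add_mem hf.1 hg.1, fun j hj => ((hf.2 j hj).add (hg.2 j hj)).congr' ?_ .rfl⟩
    filter_upwards [hf.1, hg.1] with x hfx hgx
    exact (iteratedDeriv_add (hfx.of_le (mod_cast le_top)) (hgx.of_le (mod_cast le_top))).symm
  smul_mem' c f hf := ⟨eventuallySmooth.smul_mem hf.1 c, fun j hj =>
    ((hf.2 j hj).const_mul_left c).congr_left fun x => by simp⟩

section SymbolClass

variable {n : ℕ∞} {μ ν : ℝ} {f g : ℝ → ℝ}

lemma mem_symbolClass_top : f ∈ symbolClass ⊤ μ ↔ ∀ n : ℕ, f ∈ symbolClass n μ :=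
  ⟨fun h _ => ⟨h.1, fun j _ => h.2 j le_top⟩, fun h => ⟨(h 0).1, fun j _ => (h j).2 j le_rfl⟩⟩

lemma isBigO_of_mem_symbolClass (h : f ∈ symbolClass n μ) : f =O[atTop] fun x => x ^ μ := by
  simpa using h.2 0 zero_le

lemma mem_symbolClass_zero :
    f ∈ symbolClass 0 μ ↔ f ∈ eventuallySmooth ∧ f =O[atTop] fun x => x ^ μ := by
  refine ⟨fun h => ⟨h.1, isBigO_of_mem_symbolClass h⟩, fun h => ⟨h.1, fun j hj => ?_⟩⟩
  obtain rfl : j = 0 := by simpa using hj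
  simpa using h.2

lemma mem_symbolClass_succ {n : ℕ} :
    f ∈ symbolClass n.succ μ ↔
      f ∈ eventuallySmooth ∧ (f =O[atTop] fun x => x ^ μ) ∧ deriv f ∈ symbolClass n (μ - 1) := by
  have shift (j : ℕ) : μ - (j + 1 : ℕ) = μ - 1 - j := by push_cast; ring
  refine ⟨fun h => ⟨h.1, isBigO_of_mem_symbolClass h, deriv_mem_eventuallySmooth h.1,
    fun j hj => ?_⟩, fun ⟨hf, hO, hd⟩ => ⟨hf, fun j hj => ?_⟩⟩
  · rw [← iteratedDeriv_succ', ← shift]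
    exact h.2 (j + 1) (mod_cast Nat.succ_le_succ (mod_cast hj))
  · cases j with
    | zero => simpa using hO
    | succ j =>
      rw [iteratedDeriv_succ', shift]
      exact hd.2 j (mod_cast Nat.le_of_succ_le_succ (mod_cast hj))

lemma symbolClass_mono {m : ℕ∞} (hn : m ≤ n) (hμ : μ ≤ ν) : symbolClass n μ ≤ symbolClass m ν :=
  fun _ h => ⟨h.1, fun j hj =>
    (h.2 j (hj.trans hn)).trans (isBigO_rpow_atTop_of_le (sub_le_sub_right hμ _))⟩

lemma mem_symbolClass_of_eventuallyEq_zero (h : f =ᶠ[atTop] 0) : f ∈ symbolClass n μ := by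
  refine ⟨mem_eventuallySmooth_congr h.symm (zero_mem _), fun j _ => ?_⟩
  refine (isBigO_zero _ _).congr' ?_ .rfl
  filter_upwards [eventuallyEq_atTop_iteratedDeriv h j] with x hx
  simp [hx]

lemma mem_symbolClass_congr (h : f =ᶠ[atTop] g) (hf : f ∈ symbolClass n μ) :
    g ∈ symbolClass n μ := by
  rw [← add_sub_cancel f g]
  refine add_mem hf (mem_symbolClass_of_eventuallyEq_zero ?_)
  filter_upwards [h] with x hx
  simp [hx]

lemma rpow_mem_symbolClass (n : ℕ∞) (γ : ℝ) : (fun x : ℝ => x ^ γ) ∈ symbolClass n γ := by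
  refine ⟨rpow_mem_eventuallySmooth γ, fun j _ => ?_⟩
  rw [iteratedDeriv_rpow_const]
  exact (isBigO_refl _ _).const_mul_left _

lemma mul_mem_symbolClass (hf : f ∈ symbolClass n μ) (hg : g ∈ symbolClass n ν) :
    f * g ∈ symbolClass n (μ + ν) := by
  have isBigO_mul {n : ℕ∞} {μ ν : ℝ} {f g : ℝ → ℝ} (hf : f ∈ symbolClass n μ)
      (hg : g ∈ symbolClass n ν) : (f * g) =O[atTop] fun x => x ^ (μ + ν) :=
    ((isBigO_of_mem_symbolClass hf).mul (isBigO_of_mem_symbolClass hg)).congr' .rfl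
      (rpow_mul_rpow_eventuallyEq μ ν)
  induction n using ENat.nat_induction generalizing μ ν f g with
  | zero => exact mem_symbolClass_zero.2 ⟨mul_mem hf.1 hg.1, isBigO_mul hf hg⟩
  | top ih =>
    rw [mem_symbolClass_top] at hf hg ⊢
    exact fun n => ih n (hf n) (hg n)
  | succ n ih =>
    refine mem_symbolClass_succ.2 ⟨mul_mem hf.1 hg.1, isBigO_mul hf hg, ?_⟩
    have hn : (n : ℕ∞) ≤ n.succ := mod_cast n.le_succ
    have hleft : deriv f * g ∈ symbolClass n (μ + ν - 1) := by
      convert ih (mem_symbolClass_succ.1 hf).2.2 (symbolClass_mono hn le_rfl hg) using 2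
      ring
    have hright : f * deriv g ∈ symbolClass n (μ + ν - 1) := by
      convert ih (symbolClass_mono hn le_rfl hf) (mem_symbolClass_succ.1 hg).2.2 using 2
      ring
    refine mem_symbolClass_congr ?_ (add_mem hleft hright)
    filter_upwards [differentiableAt_of_mem_eventuallySmooth hf.1,
      differentiableAt_of_mem_eventuallySmooth hg.1] with x hfx hgx
    exact (deriv_mul hfx hgx).symm

lemma comp_mem_symbolClass {s : ℝ} (hf : f ∈ symbolClass n μ) (hg : g ∈ symbolClass n s)
    (hgs : g =Θ[atTop] fun x => x ^ s) (hgtop : Tendsto g atTop atTop) :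
    f ∘ g ∈ symbolClass n (s * μ) := by
  have isBigO_comp {μ : ℝ} {f : ℝ → ℝ} (hf : f =O[atTop] fun x => x ^ μ) :
      (f ∘ g) =O[atTop] fun x => x ^ (s * μ) := by
    have hpos : ∀ᶠ x : ℝ in atTop, 0 ≤ x ^ s := by
      filter_upwards [eventually_ge_atTop 0] with x hx using rpow_nonneg hx s
    refine ((hf.comp_tendsto hgtop).trans
      (hgs.rpow (hgtop.eventually_ge_atTop 0) hpos).isBigO).congr' .rfl ?_
    filter_upwards [eventually_ge_atTop 0] with x hx using (rpow_mul hx s μ).symm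
  induction n using ENat.nat_induction generalizing μ f with
  | zero =>
    rw [mem_symbolClass_zero] at hf hg ⊢
    exact ⟨comp_mem_eventuallySmooth hf.1 hg.1 hgtop, isBigO_comp hf.2⟩
  | top ih =>
    rw [mem_symbolClass_top] at hf hg ⊢
    exact fun n => ih n (hf n) (hg n)
  | succ n ih =>
    obtain ⟨hfs, hfO, hf'⟩ := mem_symbolClass_succ.1 hf
    obtain ⟨hgs, -, hg'⟩ := mem_symbolClass_succ.1 hg
    refine mem_symbolClass_succ.2
      ⟨comp_mem_eventuallySmooth hfs hgs hgtop, isBigO_comp hfO, ?_⟩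
    have hg : g ∈ symbolClass n s := symbolClass_mono (mod_cast n.le_succ) le_rfl hg
    have hderiv : (deriv f ∘ g) * deriv g ∈ symbolClass n (s * μ - 1) := by
      convert mul_mem_symbolClass (ih hf' hg) hg' using 2
      ring
    exact mem_symbolClass_congr (deriv_comp_eventuallyEq
      (differentiableAt_of_mem_eventuallySmooth hfs)
      (differentiableAt_of_mem_eventuallySmooth hgs) hgtop).symm hderiv

lemma comp_mem_symbolClass_of_analyticAt {F : ℝ → ℝ} {c : ℝ} (hF : AnalyticAt ℝ F c)
    (hf : f ∈ symbolClass n 0) (hc : Tendsto f atTop (𝓝 c)) : F ∘ f ∈ symbolClass n 0 := by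
  have smooth_comp {F : ℝ → ℝ} (hF : AnalyticAt ℝ F c) : F ∘ f ∈ eventuallySmooth := by
    filter_upwards [hc.eventually hF.eventually_analyticAt, hf.1] with x hFx hfx
    exact hFx.contDiffAt.comp x hfx
  have isBigO_comp {F : ℝ → ℝ} (hF : AnalyticAt ℝ F c) :
      (F ∘ f) =O[atTop] fun x => x ^ (0 : ℝ) := by
    simpa using (hF.continuousAt.tendsto.comp hc).isBigO_one ℝ
  induction n using ENat.nat_induction generalizing F with
  | zero => exact mem_symbolClass_zero.2 ⟨smooth_comp hF, isBigO_comp hF⟩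
  | top ih =>
    rw [mem_symbolClass_top] at hf ⊢
    exact fun n => ih n hF (hf n)
  | succ n ih =>
    refine mem_symbolClass_succ.2 ⟨smooth_comp hF, isBigO_comp hF, ?_⟩
    have hFf := ih hF.deriv (symbolClass_mono (mod_cast n.le_succ) le_rfl hf)
    have hderiv : (deriv F ∘ f) * deriv f ∈ symbolClass n (0 - 1) := by
      convert mul_mem_symbolClass hFf (mem_symbolClass_succ.1 hf).2.2 using 2
      ring
    exact mem_symbolClass_congr (deriv_comp_eventuallyEq
      (hF.eventually_analyticAt.mono fun _ h => h.differentiableAt)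
      (differentiableAt_of_mem_eventuallySmooth hf.1) hc).symm hderiv

end SymbolClass

/-- The span of the monomials `x^(γ-i)`, `i : ℕ`: the partial sums of the expansions that define
`A^(γ)`. -/
def laurentSpan (γ : ℝ) : Submodule ℝ (ℝ → ℝ) :=
  Submodule.span ℝ (Set.range fun i : ℕ => fun x : ℝ => x ^ (γ - i))

/-- The class `A^(γ)` as a vector space (`memA_iff_mem_classicalSymbol`), in the form used for
classical symbols in microlocal analysis: the functions which for every `N` agree with a
combination of the `x^(γ-i)` up to a symbol of order `γ-N`. The combinations for different `N`
need not be chosen coherently. -/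
def classicalSymbol (γ : ℝ) : Submodule ℝ (ℝ → ℝ) :=
  ⨅ N : ℕ, laurentSpan γ ⊔ symbolClass ⊤ (γ - N)

section ClassicalSymbol

variable {γ δ c d : ℝ} {α β : ℝ → ℝ}

lemma rpow_sub_natCast_mem_laurentSpan (γ : ℝ) (i : ℕ) :
    (fun x : ℝ => x ^ (γ - i)) ∈ laurentSpan γ :=
  Submodule.subset_span ⟨i, rfl⟩

lemma laurentSpan_le_symbolClass (n : ℕ∞) (γ : ℝ) : laurentSpan γ ≤ symbolClass n γ := by
  rw [laurentSpan, Submodule.span_le, Set.range_subset_iff]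
  exact fun i => symbolClass_mono le_rfl (sub_le_self γ i.cast_nonneg) (rpow_mem_symbolClass n _)

lemma laurentSpan_le_add_natCast (γ : ℝ) (n : ℕ) : laurentSpan γ ≤ laurentSpan (γ + n) := by
  rw [laurentSpan, Submodule.span_le, Set.range_subset_iff]
  intro i
  have hexp : γ - i = γ + n - (i + n : ℕ) := by
    push_cast
    ring
  exact hexp ▸ rpow_sub_natCast_mem_laurentSpan (γ + n) (i + n)

lemma laurentSpan_le_span_singleton_sup (γ : ℝ) :
    laurentSpan γ ≤ ℝ ∙ (fun x : ℝ => x ^ γ) ⊔ laurentSpan (γ - 1) := by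
  rw [laurentSpan, Submodule.span_le, Set.range_subset_iff]
  rintro (_ | i)
  · exact Submodule.mem_sup_left (by simp [Submodule.mem_span_singleton_self])
  · have hexp : γ - (i + 1 : ℕ) = γ - 1 - i := by
      push_cast
      ring
    exact hexp ▸ Submodule.mem_sup_right (rpow_sub_natCast_mem_laurentSpan (γ - 1) i)

lemma mem_classicalSymbol :
    α ∈ classicalSymbol γ ↔ ∀ N : ℕ, α ∈ laurentSpan γ ⊔ symbolClass ⊤ (γ - N) :=
  Submodule.mem_iInf _

lemma laurentSpan_le_classicalSymbol (γ : ℝ) : laurentSpan γ ≤ classicalSymbol γ :=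
  le_iInf fun _ => le_sup_left

lemma rpow_mem_classicalSymbol (γ : ℝ) : (fun x : ℝ => x ^ γ) ∈ classicalSymbol γ := by
  simpa using laurentSpan_le_classicalSymbol γ (rpow_sub_natCast_mem_laurentSpan γ 0)

lemma const_mem_classicalSymbol (c : ℝ) : (fun _ => c) ∈ classicalSymbol 0 := by
  convert (classicalSymbol 0).smul_mem c (rpow_mem_classicalSymbol 0) using 1
  ext x
  simp

lemma classicalSymbol_le_symbolClass (γ : ℝ) : classicalSymbol γ ≤ symbolClass ⊤ γ :=
  (iInf_le _ 0).trans (sup_le (laurentSpan_le_symbolClass ⊤ γ) (by simp))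

lemma mem_classicalSymbol_of_forall_mem_sup
    (h : ∀ N : ℕ, α ∈ classicalSymbol γ ⊔ symbolClass ⊤ (γ - N)) : α ∈ classicalSymbol γ :=
  mem_classicalSymbol.2 fun N =>
    (sup_le (iInf_le _ N) le_sup_right : classicalSymbol γ ⊔ symbolClass ⊤ (γ - N) ≤ _) (h N)

lemma mem_classicalSymbol_of_forall_mem_symbolClass (h : ∀ μ, α ∈ symbolClass ⊤ μ) :
    α ∈ classicalSymbol γ :=
  mem_classicalSymbol.2 fun _ => Submodule.mem_sup_right (h _)

lemma mem_classicalSymbol_congr (h : α =ᶠ[atTop] β) (hα : α ∈ classicalSymbol γ) :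
    β ∈ classicalSymbol γ := by
  rw [← add_sub_cancel α β]
  refine add_mem hα (mem_classicalSymbol_of_forall_mem_symbolClass fun μ =>
    mem_symbolClass_of_eventuallyEq_zero ?_)
  filter_upwards [h] with x hx
  simp [hx]

lemma classicalSymbol_le_add_natCast (γ : ℝ) (n : ℕ) :
    classicalSymbol γ ≤ classicalSymbol (γ + n) :=
  iInf_mono fun _ => sup_le_sup (laurentSpan_le_add_natCast γ n)
    (symbolClass_mono le_rfl (by gcongr; simp))

lemma mul_mem_classicalSymbol_of_mem_laurentSpan (hα : α ∈ laurentSpan γ)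
    (hβ : β ∈ laurentSpan δ) : α * β ∈ classicalSymbol (γ + δ) := by
  suffices laurentSpan γ * laurentSpan δ ≤ classicalSymbol (γ + δ) from
    this (Submodule.mul_mem_mul hα hβ)
  rw [laurentSpan, laurentSpan, Submodule.span_mul_span, Submodule.span_le, Set.mul_subset_iff]
  rintro _ ⟨i, rfl⟩ _ ⟨j, rfl⟩
  have hij := laurentSpan_le_classicalSymbol _ (rpow_sub_natCast_mem_laurentSpan (γ + δ) (i + j))
  refine mem_classicalSymbol_congr ((rpow_mul_rpow_eventuallyEq (γ - i) (δ - j)).trans ?_).symm hij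
  rw [Nat.cast_add, add_sub_add_comm]

lemma mul_mem_classicalSymbol (hα : α ∈ classicalSymbol γ) (hβ : β ∈ classicalSymbol δ) :
    α * β ∈ classicalSymbol (γ + δ) := by
  refine mem_classicalSymbol_of_forall_mem_sup fun N => ?_
  obtain ⟨u, hu, r, hr, rfl⟩ := Submodule.mem_sup.1 (mem_classicalSymbol.1 hα N)
  obtain ⟨v, hv, t, ht, rfl⟩ := Submodule.mem_sup.1 (mem_classicalSymbol.1 hβ N)
  rw [add_mul, mul_add, add_assoc]
  refine Submodule.add_mem_sup (mul_mem_classicalSymbol_of_mem_laurentSpan hu hv) (add_mem ?_ ?_)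
  · convert mul_mem_symbolClass (laurentSpan_le_symbolClass ⊤ γ hu) ht using 2
    ring
  · convert mul_mem_symbolClass hr (classicalSymbol_le_symbolClass δ hβ) using 2
    ring

lemma tendsto_div_rpow_of_sub_smul_mem_symbolClass {n : ℕ∞}
    (h : α - c • (fun x : ℝ => x ^ γ) ∈ symbolClass n (γ - 1)) :
    Tendsto (fun x => α x / x ^ γ) atTop (𝓝 c) := by
  have hdecay : Tendsto (fun x : ℝ => x ^ (γ - 1) / x ^ γ) atTop (𝓝 0) := by
    refine tendsto_inv_atTop_zero.congr' ?_
    filter_upwards [eventually_gt_atTop 0] with x hx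
    rw [← rpow_sub hx, sub_sub_cancel_left, rpow_neg_one]
  have hdiff : Tendsto (fun x => (α x - c * x ^ γ) / x ^ γ) atTop (𝓝 0) :=
    ((isBigO_of_mem_symbolClass h).mul (isBigO_refl (fun x : ℝ => (x ^ γ)⁻¹) atTop)).trans_tendsto
      hdecay
  refine (zero_add c ▸ hdiff.add_const c).congr' ?_
  filter_upwards [eventually_gt_atTop 0] with x hx
  have := (rpow_pos_of_pos hx γ).ne'
  field_simp
  ring

lemma exists_sub_smul_rpow_mem_sup (hα : α ∈ classicalSymbol γ) (N : ℕ) :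
    ∃ c : ℝ, α - c • (fun x : ℝ => x ^ γ) ∈ laurentSpan (γ - 1) ⊔ symbolClass ⊤ (γ - 1 - N) := by
  obtain ⟨u, hu, r, hr, rfl⟩ := Submodule.mem_sup.1 (mem_classicalSymbol.1 hα (N + 1))
  obtain ⟨_, hw, v, hv, rfl⟩ := Submodule.mem_sup.1 (laurentSpan_le_span_singleton_sup γ hu)
  obtain ⟨c, rfl⟩ := Submodule.mem_span_singleton.1 hw
  refine ⟨c, ?_⟩
  rw [add_assoc, add_sub_cancel_left]
  refine Submodule.add_mem_sup hv ?_
  convert hr using 2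
  push_cast
  ring

lemma exists_sub_smul_rpow_mem_sup_and_tendsto (hα : α ∈ classicalSymbol γ) (N : ℕ) :
    ∃ c : ℝ, α - c • (fun x : ℝ => x ^ γ) ∈ laurentSpan (γ - 1) ⊔ symbolClass ⊤ (γ - 1 - N) ∧
      Tendsto (fun x => α x / x ^ γ) atTop (𝓝 c) := by
  obtain ⟨c, hc⟩ := exists_sub_smul_rpow_mem_sup hα N
  refine ⟨c, hc, tendsto_div_rpow_of_sub_smul_mem_symbolClass (n := ⊤) ?_⟩
  exact sup_le (laurentSpan_le_symbolClass ⊤ _)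
    (symbolClass_mono le_rfl (sub_le_self _ N.cast_nonneg)) hc

lemma exists_tendsto_div_rpow (hα : α ∈ classicalSymbol γ) :
    ∃ c : ℝ, Tendsto (fun x => α x / x ^ γ) atTop (𝓝 c) :=
  (exists_sub_smul_rpow_mem_sup_and_tendsto hα 0).imp fun _ h => h.2

lemma sub_smul_rpow_mem_classicalSymbol (hα : α ∈ classicalSymbol γ)
    (hc : Tendsto (fun x => α x / x ^ γ) atTop (𝓝 c)) :
    α - c • (fun x : ℝ => x ^ γ) ∈ classicalSymbol (γ - 1) := by
  refine mem_classicalSymbol.2 fun N => ?_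
  obtain ⟨d, hd, hdlim⟩ := exists_sub_smul_rpow_mem_sup_and_tendsto hα N
  rwa [tendsto_nhds_unique hc hdlim]

lemma comp_mem_classicalSymbol_of_analyticAt {F : ℝ → ℝ} (hα : α ∈ classicalSymbol 0)
    (hc : Tendsto α atTop (𝓝 c)) (hF : AnalyticAt ℝ F c) : F ∘ α ∈ classicalSymbol 0 := by
  have hα' : (fun x => α x - c) ∈ classicalSymbol (-1) := by
    convert sub_smul_rpow_mem_classicalSymbol (c := c) hα (by simpa using hc) using 1
    · simp
    · ext x
      simp
  refine mem_classicalSymbol_of_forall_mem_sup fun N => ?_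
  induction N generalizing F with
  | zero =>
    refine Submodule.mem_sup_right ?_
    simpa using comp_mem_symbolClass_of_analyticAt hF (classicalSymbol_le_symbolClass 0 hα) hc
  | succ N ih =>
    -- In `F ∘ α = F c + (α - c) * (dslope F c ∘ α)` the factor `α - c` gains one order.
    have hdslope : AnalyticAt ℝ (dslope F c) c :=
      hF.elim fun _ hp => hp.has_fpower_series_dslope_fslope.analyticAt
    obtain ⟨w, hw, r, hr, hwr⟩ := Submodule.mem_sup.1 (ih hdslope)
    have hFα : F ∘ α = ((fun _ => F c) + (fun x => α x - c) * w) + (fun x => α x - c) * r := by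
      rw [add_assoc, ← mul_add, hwr]
      ext x
      have := sub_smul_dslope F c (α x)
      simp_all
    rw [hFα]
    refine Submodule.add_mem_sup (add_mem (const_mem_classicalSymbol _) ?_) ?_
    · simpa using classicalSymbol_le_add_natCast _ 1 (mul_mem_classicalSymbol hα' hw)
    · convert mul_mem_symbolClass (classicalSymbol_le_symbolClass _ hα') hr using 2
      push_cast
      ring

end ClassicalSymbol

section Expansion

variable {γ δ c : ℝ} {α β f g : ℝ → ℝ}

lemma mem_eventuallySmooth_iff_exists_Ioi :
    α ∈ eventuallySmooth ↔ ∃ a : ℝ, 0 < a ∧ ∀ x ∈ Set.Ioi a, ContDiffAt ℝ ∞ α x := by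
  refine ⟨fun h => ?_, fun ⟨a, _, ha⟩ => (eventually_gt_atTop a).mono ha⟩
  obtain ⟨a, ha⟩ := eventually_atTop.1 h
  exact ⟨max a 1, by positivity, fun x hx => ha x ((le_max_left a 1).trans hx.le)⟩

lemma iteratedDeriv_sum_smul_rpow (b r : ℕ → ℝ) (I : Finset ℕ) (j : ℕ) {x : ℝ} (hx : x ≠ 0) :
    iteratedDeriv j (∑ i ∈ I, b i • fun y : ℝ => y ^ r i) x =
      ∑ i ∈ I, b i * (∏ l ∈ range j, (r i - l)) * x ^ (r i - j) := by
  have smooth (i : ℕ) : ContDiffAt ℝ j (b i • fun y : ℝ => y ^ r i) x :=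
    (contDiffAt_rpow_const_of_ne hx).const_smul (b i)
  rw [iteratedDeriv_sum fun i _ => smooth i]
  refine sum_congr rfl fun i _ => ?_
  rw [iteratedDeriv_const_smul_field, iteratedDeriv_rpow_const, descPochhammer_eval_eq_prod_range,
    smul_eq_mul, mul_assoc]

lemma sum_smul_rpow_mem_laurentSpan (γ : ℝ) (b : ℕ → ℝ) (I : Finset ℕ) :
    ∑ i ∈ I, b i • (fun x : ℝ => x ^ (γ - i)) ∈ laurentSpan γ :=
  sum_mem fun i _ => Submodule.smul_mem _ _ (rpow_sub_natCast_mem_laurentSpan γ i)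

lemma hasExpA_iff {b : ℕ → ℝ} :
    HasExpA γ b α ↔ ∀ N : ℕ,
      α - ∑ i ∈ range N, b i • (fun x : ℝ => x ^ (γ - i)) ∈ symbolClass ⊤ (γ - N) := by
  have sum_smooth (N : ℕ) : ∑ i ∈ range N, b i • (fun x : ℝ => x ^ (γ - i)) ∈ eventuallySmooth :=
    (laurentSpan_le_symbolClass ⊤ γ (sum_smul_rpow_mem_laurentSpan γ b _)).1
  have iteratedDeriv_sub_sum (hα : α ∈ eventuallySmooth) (j N : ℕ) :
      iteratedDeriv j (α - ∑ i ∈ range N, b i • fun x : ℝ => x ^ (γ - i)) =ᶠ[atTop] fun x =>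
        iteratedDeriv j α x -
          ∑ i ∈ range N, b i * (∏ l ∈ range j, (γ - i - l)) * x ^ (γ - i - j) := by
    filter_upwards [hα, sum_smooth N, eventually_ne_atTop 0] with x hαx hsum hx
    rw [iteratedDeriv_sub (hαx.of_le (mod_cast le_top)) (hsum.of_le (mod_cast le_top)),
      iteratedDeriv_sum_smul_rpow _ _ _ _ hx]
  rw [HasExpA, ← mem_eventuallySmooth_iff_exists_Ioi]
  refine ⟨fun ⟨hα, hO⟩ N => ⟨sub_mem hα (sum_smooth N), fun j _ =>
    (hO j N).congr' (iteratedDeriv_sub_sum hα j N).symm .rfl⟩, fun h => ?_⟩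
  have hα : α ∈ eventuallySmooth := by simpa using (h 0).1
  exact ⟨hα, fun j N => ((h N).2 j le_top).congr' (iteratedDeriv_sub_sum hα j N) .rfl⟩

lemma HasExpA.mem_classicalSymbol {b : ℕ → ℝ} (h : HasExpA γ b α) : α ∈ classicalSymbol γ := by
  refine _root_.mem_classicalSymbol.2 fun N => ?_
  rw [← add_sub_cancel (∑ i ∈ range N, b i • fun x : ℝ => x ^ (γ - i)) α]
  exact Submodule.add_mem_sup (sum_smul_rpow_mem_laurentSpan γ b _) (hasExpA_iff.1 h N)

lemma HasExpA.tendsto_div_rpow {b : ℕ → ℝ} (h : HasExpA γ b α) :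
    Tendsto (fun x => α x / x ^ γ) atTop (𝓝 (b 0)) :=
  tendsto_div_rpow_of_sub_smul_mem_symbolClass (n := ⊤) (by simpa using hasExpA_iff.1 h 1)

lemma memA_iff_mem_classicalSymbol : MemA γ α ↔ α ∈ classicalSymbol γ := by
  refine ⟨fun ⟨b, hb⟩ => hb.mem_classicalSymbol, fun hα => ?_⟩
  have split (δ : ℝ) (β : ℝ → ℝ) : ∃ c : ℝ, β ∈ classicalSymbol δ →
      β - c • (fun x : ℝ => x ^ δ) ∈ classicalSymbol (δ - 1) := by
    by_cases hβ : β ∈ classicalSymbol δ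
    · obtain ⟨c, hc⟩ := exists_tendsto_div_rpow hβ
      exact ⟨c, fun _ => sub_smul_rpow_mem_classicalSymbol hβ hc⟩
    · exact ⟨0, fun h => absurd h hβ⟩
  choose lead sub_lead_mem using split
  let rem : ℕ → ℝ → ℝ := Nat.rec α fun i r => r - lead (γ - i) r • fun x : ℝ => x ^ (γ - i)
  have rem_mem (N : ℕ) : rem N ∈ classicalSymbol (γ - N) := by
    induction N with
    | zero => simpa [rem] using hα
    | succ N ih =>
      convert sub_lead_mem _ _ ih using 2
      push_cast
      ring
  have rem_eq (N : ℕ) :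
      rem N = α - ∑ i ∈ range N, lead (γ - i) (rem i) • fun x : ℝ => x ^ (γ - i) := by
    induction N with
    | zero => simp [rem]
    | succ N ih =>
      rw [sum_range_succ, ← sub_sub, ← ih]
  exact ⟨fun i => lead (γ - i) (rem i), hasExpA_iff.2 fun N =>
    rem_eq N ▸ classicalSymbol_le_symbolClass _ (rem_mem N)⟩

lemma HasExpA.deriv {b : ℕ → ℝ} (h : HasExpA γ b α) :
    HasExpA (γ - 1) (fun i => b i * (γ - i)) (deriv α) := by
  obtain ⟨⟨a, ha, hα⟩, hO⟩ := h
  refine ⟨⟨a, ha, fun x hx => (hα x hx).derivWithin (by norm_cast)⟩, fun j N => ?_⟩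
  have exponent (t : ℝ) : γ - 1 - t - j = γ - t - (j + 1 : ℕ) := by
    push_cast
    ring
  have coefficient (t : ℝ) :
      ∏ l ∈ range (j + 1), (γ - t - l) = (γ - t) * ∏ l ∈ range j, (γ - 1 - t - l) := by
    rw [prod_range_succ', mul_comm, Nat.cast_zero, sub_zero]
    congr! 2 with l
    push_cast
    ring
  simpa only [exponent, coefficient, ← iteratedDeriv_succ', ← mul_assoc] using hO (j + 1) N

lemma deriv_mem_classicalSymbol (h : α ∈ classicalSymbol γ) :
    deriv α ∈ classicalSymbol (γ - 1) := by
  obtain ⟨b, hb⟩ := memA_iff_mem_classicalSymbol.2 h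
  exact hb.deriv.mem_classicalSymbol

lemma memAS_iff :
    MemAS γ α ↔ α ∈ classicalSymbol γ ∧
      ∃ c : ℝ, c ≠ 0 ∧ Tendsto (fun x => α x / x ^ γ) atTop (𝓝 c) := by
  refine ⟨fun ⟨b, hb0, hb⟩ => ⟨hb.mem_classicalSymbol, b 0, hb0, hb.tendsto_div_rpow⟩,
    fun ⟨hα, c, hc, hlim⟩ => ?_⟩
  obtain ⟨b, hb⟩ := memA_iff_mem_classicalSymbol.2 hα
  exact ⟨b, tendsto_nhds_unique hlim hb.tendsto_div_rpow ▸ hc, hb⟩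

lemma MemAS.mem_classicalSymbol (h : MemAS γ α) : α ∈ classicalSymbol γ :=
  (memAS_iff.1 h).1

lemma MemAS.isTheta (h : MemAS γ α) : α =Θ[atTop] fun x => x ^ γ := by
  obtain ⟨-, c, hc, hlim⟩ := memAS_iff.1 h
  exact (isTheta_of_div_tendsto_nhds_ne_zero hlim hc).symm

lemma MemAS.eventually_ne_zero (h : MemAS γ α) : ∀ᶠ x in atTop, α x ≠ 0 := by
  filter_upwards [h.isTheta.eq_zero_iff, eventually_gt_atTop 0] with x hx hx0
  exact fun h0 => (rpow_pos_of_pos hx0 γ).ne' (hx.1 h0)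

lemma MemAS.congr (h : α =ᶠ[atTop] β) (hα : MemAS γ α) : MemAS γ β := by
  obtain ⟨hα, c, hc, hlim⟩ := memAS_iff.1 hα
  refine memAS_iff.2 ⟨mem_classicalSymbol_congr h hα, c, hc, hlim.congr' ?_⟩
  filter_upwards [h] with x hx
  rw [hx]

lemma memAS_rpow (γ : ℝ) : MemAS γ fun x => x ^ γ := by
  refine memAS_iff.2 ⟨rpow_mem_classicalSymbol γ, 1, one_ne_zero, ?_⟩
  refine tendsto_const_nhds.congr' ?_
  filter_upwards [eventually_gt_atTop 0] with x hx
  rw [div_self (rpow_pos_of_pos hx γ).ne']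

lemma MemAS.mul (hα : MemAS γ α) (hβ : MemAS δ β) : MemAS (γ + δ) (α * β) := by
  obtain ⟨hα, c, hc, hαlim⟩ := memAS_iff.1 hα
  obtain ⟨hβ, d, hd, hβlim⟩ := memAS_iff.1 hβ
  refine memAS_iff.2 ⟨mul_mem_classicalSymbol hα hβ, c * d, mul_ne_zero hc hd, ?_⟩
  refine (hαlim.mul hβlim).congr' ?_
  filter_upwards [rpow_mul_rpow_eventuallyEq γ δ] with x hx
  rw [← hx, Pi.mul_apply, mul_div_mul_comm]

lemma MemAS.deriv (hγ : γ ≠ 0) (h : MemAS γ α) : MemAS (γ - 1) (deriv α) := by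
  obtain ⟨b, hb0, hb⟩ := h
  exact ⟨_, by simpa [hγ] using hb0, hb.deriv⟩

lemma MemAS.ne_zero_of_tendsto_atTop (h : MemAS γ α) (htop : Tendsto α atTop atTop) : γ ≠ 0 := by
  rintro rfl
  obtain ⟨-, c, -, hlim⟩ := memAS_iff.1 h
  exact not_tendsto_nhds_of_tendsto_atTop htop c (by simpa using hlim)

lemma memAS_comp_div_rpow_of_analyticAt {F : ℝ → ℝ} (hα : α ∈ classicalSymbol γ)
    (hc : Tendsto (fun x => α x / x ^ γ) atTop (𝓝 c)) (hF : AnalyticAt ℝ F c) (hFc : F c ≠ 0) :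
    MemAS 0 fun x => F (α x / x ^ γ) := by
  have hquot : (fun x => α x / x ^ γ) ∈ classicalSymbol 0 := by
    refine mem_classicalSymbol_congr ?_
      (add_neg_cancel γ ▸ mul_mem_classicalSymbol hα (rpow_mem_classicalSymbol (-γ)))
    filter_upwards [eventually_ge_atTop 0] with x hx
    rw [Pi.mul_apply, rpow_neg hx, div_eq_mul_inv]
  refine memAS_iff.2 ⟨comp_mem_classicalSymbol_of_analyticAt hquot hc hF, F c, hFc, ?_⟩
  simpa [Function.comp_def] using hF.continuousAt.tendsto.comp hc

lemma MemAS.inv (h : MemAS γ α) : MemAS (-γ) α⁻¹ := by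
  obtain ⟨hα, c, hc, hlim⟩ := memAS_iff.1 h
  have hquot := memAS_comp_div_rpow_of_analyticAt hα hlim (analyticAt_inv hc) (inv_ne_zero hc)
  refine (add_zero (-γ) ▸ (memAS_rpow (-γ)).mul hquot).congr ?_
  filter_upwards [eventually_gt_atTop 0] with x hx
  have := (rpow_pos_of_pos hx γ).ne'
  rw [Pi.mul_apply, Pi.inv_apply, rpow_neg hx.le]
  field_simp

lemma analyticAt_rpow_const_of_ne {x : ℝ} (r : ℝ) (hx : x ≠ 0) :
    AnalyticAt ℝ (fun y : ℝ => y ^ r) x :=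
  (contDiffAt_rpow_const_of_ne hx : ContDiffAt ℝ ω _ x).analyticAt

lemma MemAS.rpow (h : MemAS γ α) (hpos : ∀ᶠ x in atTop, 0 ≤ α x) (r : ℝ) :
    MemAS (γ * r) fun x => α x ^ r := by
  obtain ⟨hα, c, hc, hlim⟩ := memAS_iff.1 h
  have hc0 : 0 < c := by
    refine lt_of_le_of_ne (ge_of_tendsto hlim ?_) hc.symm
    filter_upwards [hpos, eventually_ge_atTop 0] with x hαx hx using
      div_nonneg hαx (rpow_nonneg hx γ)
  have hquot := memAS_comp_div_rpow_of_analyticAt hα hlim (analyticAt_rpow_const_of_ne r hc)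
    (rpow_pos_of_pos hc0 r).ne'
  refine (add_zero (γ * r) ▸ (memAS_rpow (γ * r)).mul hquot).congr ?_
  filter_upwards [hpos, eventually_gt_atTop 0] with x hαx hx
  rw [Pi.mul_apply, rpow_mul hx.le, div_rpow hαx (rpow_nonneg hx.le γ), mul_div_cancel₀]
  exact (rpow_pos_of_pos (rpow_pos_of_pos hx γ) r).ne'

lemma comp_mem_classicalSymbol {s : ℕ} (hf : f ∈ classicalSymbol γ) (hg : MemAS s g)
    (hgtop : Tendsto g atTop atTop) : f ∘ g ∈ classicalSymbol (s * γ) := by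
  have hs : 1 ≤ (s : ℝ) := by
    have : s ≠ 0 := by simpa using hg.ne_zero_of_tendsto_atTop hgtop
    exact_mod_cast Nat.one_le_iff_ne_zero.2 this
  have laurentSpan_le :
      laurentSpan γ ≤ (classicalSymbol (s * γ)).comap (LinearMap.funLeft ℝ ℝ g) := by
    rw [laurentSpan, Submodule.span_le, Set.range_subset_iff]
    intro i
    have hgi : (fun x => g x ^ (γ - i)) ∈ classicalSymbol (s * (γ - i)) :=
      (hg.rpow (hgtop.eventually_ge_atTop 0) _).mem_classicalSymbol
    have hexp : s * (γ - i) + (s * i : ℕ) = s * γ := by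
      push_cast
      ring
    exact hexp ▸ classicalSymbol_le_add_natCast _ (s * i) hgi
  refine mem_classicalSymbol_of_forall_mem_sup fun N => ?_
  obtain ⟨u, hu, r, hr, rfl⟩ := Submodule.mem_sup.1 (mem_classicalSymbol.1 hf N)
  have hrg : r ∘ g ∈ symbolClass ⊤ (s * (γ - N)) :=
    comp_mem_symbolClass hr (classicalSymbol_le_symbolClass _ hg.mem_classicalSymbol)
      hg.isTheta hgtop
  refine Submodule.add_mem_sup (laurentSpan_le hu) (symbolClass_mono le_rfl ?_ hrg)
  nlinarith [(N.cast_nonneg : (0 : ℝ) ≤ N)]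

lemma MemAS.comp {s : ℕ} (hf : MemAS γ f) (hg : MemAS s g) (hgtop : Tendsto g atTop atTop) :
    MemAS (s * γ) (f ∘ g) := by
  obtain ⟨hfγ, c, hc, hlim⟩ := memAS_iff.1 hf
  obtain ⟨-, d, hd, hglim⟩ := memAS_iff.1 (hg.rpow (hgtop.eventually_ge_atTop 0) γ)
  refine memAS_iff.2 ⟨comp_mem_classicalSymbol hfγ hg hgtop, c * d, mul_ne_zero hc hd, ?_⟩
  refine ((hlim.comp hgtop).mul hglim).congr' ?_
  filter_upwards [hgtop.eventually_gt_atTop 0] with x hx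
  exact div_mul_div_cancel₀ (rpow_pos_of_pos hx γ).ne'

lemma exists_memAS_or_forall_mem_symbolClass (h : α ∈ classicalSymbol γ) :
    (∃ n : ℕ, MemAS (γ - n) α) ∨ ∀ μ, α ∈ symbolClass ⊤ μ := by
  refine or_iff_not_imp_left.2 fun hn μ => ?_
  push Not at hn
  have mem_sub (n : ℕ) : α ∈ classicalSymbol (γ - n) := by
    induction n with
    | zero => simpa using h
    | succ n ih =>
      obtain ⟨c, hc⟩ := exists_tendsto_div_rpow ih
      obtain rfl : c = 0 := by_contra fun hc0 => hn n (memAS_iff.2 ⟨ih, c, hc0, hc⟩)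
      convert sub_smul_rpow_mem_classicalSymbol ih hc using 2
      · push_cast
        ring
      · simp
  obtain ⟨n, hn⟩ := exists_nat_ge (γ - μ)
  exact symbolClass_mono le_rfl (by linarith) (classicalSymbol_le_symbolClass _ (mem_sub n))

lemma forall_mem_symbolClass_top_iff :
    (∀ μ, α ∈ symbolClass ⊤ μ) ↔ (∀ᶠ x in atTop, ContDiffAt ℝ ∞ α x) ∧
      ∀ μ : ℝ, 0 < μ → ∀ j : ℕ, iteratedDeriv j α =O[atTop] fun x => x ^ (-μ) := by
  refine ⟨fun h => ⟨(h 0).1, fun μ _ j => ?_⟩, fun ⟨hα, hO⟩ μ => ⟨hα, fun j _ => ?_⟩⟩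
  · simpa using (h (j - μ)).2 j le_top
  · refine (hO _ (lt_max_of_lt_right one_pos : 0 < max (j - μ) 1) j).trans
      (isBigO_rpow_atTop_of_le ?_)
    linarith [le_max_left (j - μ) 1]

lemma mem_classicalSymbol_natCast_iff {k : ℕ} :
    α ∈ classicalSymbol k ↔
      ((∀ᶠ x in atTop, ContDiffAt ℝ ∞ α x) ∧
        ∀ μ : ℝ, 0 < μ → ∀ j : ℕ, iteratedDeriv j α =O[atTop] fun x => x ^ (-μ)) ∨
      ∃ i : ℤ, i ≤ k ∧ MemAS i α := by
  rw [← forall_mem_symbolClass_top_iff, or_comm]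
  constructor
  · refine fun h => (exists_memAS_or_forall_mem_symbolClass h).imp_left fun ⟨n, hn⟩ => ?_
    exact ⟨k - n, by simp, mod_cast hn⟩
  · rintro (⟨i, hi, hα⟩ | h)
    · obtain ⟨n, hn⟩ := Int.le.dest hi
      have hik : (i : ℝ) + n = k := mod_cast hn
      exact hik ▸ classicalSymbol_le_add_natCast i n hα.mem_classicalSymbol
    · exact mem_classicalSymbol_of_forall_mem_symbolClass h

lemma memB_iff {m : ℕ} :
    MemB m f ↔ f ∈ eventuallySmooth ∧ ∃ p : ℕ → ℝ → ℝ,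
      (∀ᶠ x in atTop, f x = ∑ k ∈ Icc 1 m, p k x * iteratedDeriv k f x) ∧
      (∀ k ∈ Icc 1 m, p k ∈ classicalSymbol k) ∧ ∃ i : ℤ, i ≤ m ∧ MemAS i (p m) := by
  simp only [MemB, ← mem_classicalSymbol_natCast_iff]
  refine and_congr_right fun _ => exists_congr fun p => and_congr_right fun _ =>
    and_congr_left fun hm => ⟨fun h k hk => ?_, fun h k hk => ?_⟩
  · rw [mem_Icc] at hk
    rcases hk.2.eq_or_lt with rfl | hkm
    · exact mem_classicalSymbol_natCast_iff.2 (.inr hm)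
    · exact h k (mem_Icc.2 ⟨hk.1, Nat.le_sub_one_of_lt hkm⟩)
  · exact h k (Icc_subset_Icc_right (Nat.sub_le m 1) hk)

end Expansion

/-- The coefficients `q_{k,j}` of the inverted chain rule
`f^{(k)} ∘ g = ∑_j q_{k,j} (f ∘ g)^{(j)}` (`iteratedDeriv_comp_eventuallyEq`). The recursion is
found by differentiating this formula and dividing by `g'`. -/
def chainCoeff (g : ℝ → ℝ) : ℕ → ℕ → ℝ → ℝ
  | 0, 0 => 1
  | 0, _ + 1 => 0
  | _ + 1, 0 => 0
  | k + 1, j + 1 => (deriv (chainCoeff g k (j + 1)) + chainCoeff g k j) * (deriv g)⁻¹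

section ChainCoeff

variable {f g : ℝ → ℝ}

lemma chainCoeff_eq_zero_of_lt (g : ℝ → ℝ) {k j : ℕ} (h : k < j) : chainCoeff g k j = 0 := by
  induction k generalizing j with
  | zero =>
    obtain ⟨j, rfl⟩ := Nat.exists_eq_succ_of_ne_zero h.ne'
    rw [chainCoeff]
  | succ k ih =>
    obtain ⟨j, rfl⟩ := Nat.exists_eq_succ_of_ne_zero (Nat.ne_zero_of_lt h)
    rw [chainCoeff, ih (by omega), ih (by omega), deriv_zero, zero_add, zero_mul]

lemma chainCoeff_self_succ (g : ℝ → ℝ) (k : ℕ) :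
    chainCoeff g (k + 1) (k + 1) = chainCoeff g k k * (deriv g)⁻¹ := by
  rw [chainCoeff, chainCoeff_eq_zero_of_lt g k.lt_succ_self, deriv_zero, zero_add]

lemma deriv_chainCoeff_zero_right (g : ℝ → ℝ) (k : ℕ) : deriv (chainCoeff g k 0) = 0 := by
  cases k <;> simp only [chainCoeff, deriv_zero, deriv_one]

lemma chainCoeff_mem_eventuallySmooth (hg : g ∈ eventuallySmooth)
    (hg' : ∀ᶠ x in atTop, deriv g x ≠ 0) (k j : ℕ) : chainCoeff g k j ∈ eventuallySmooth := by
  induction k generalizing j with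
  | zero => cases j <;> rw [chainCoeff] <;> apply_rules [one_mem, zero_mem]
  | succ k ih =>
    cases j with
    | zero =>
      rw [chainCoeff]
      exact zero_mem _
    | succ j =>
      rw [chainCoeff]
      exact mul_mem (add_mem (deriv_mem_eventuallySmooth (ih (j + 1))) (ih j))
        (inv_mem_eventuallySmooth (deriv_mem_eventuallySmooth hg) hg')

lemma chainCoeff_mem_classicalSymbol {s : ℝ} (hs : s ≠ 0) (hg : MemAS s g) (k j : ℕ) :
    chainCoeff g k j ∈ classicalSymbol (j - k * s) := by
  induction k generalizing j with
  | zero =>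
    cases j with
    | zero => simpa [chainCoeff, Pi.one_def] using const_mem_classicalSymbol 1
    | succ j =>
      rw [chainCoeff]
      exact zero_mem _
  | succ k ih =>
    cases j with
    | zero =>
      rw [chainCoeff]
      exact zero_mem _
    | succ j =>
      have hderiv : deriv (chainCoeff g k (j + 1)) ∈ classicalSymbol (j - k * s) := by
        convert deriv_mem_classicalSymbol (ih (j + 1)) using 2
        push_cast
        ring
      rw [chainCoeff]
      convert mul_mem_classicalSymbol (add_mem hderiv (ih j))
        (hg.deriv hs).inv.mem_classicalSymbol using 2
      push_cast
      ring

lemma memAS_chainCoeff_self {s : ℝ} (hs : s ≠ 0) (hg : MemAS s g) (k : ℕ) :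
    MemAS (k - k * s) (chainCoeff g k k) := by
  induction k with
  | zero => simpa [chainCoeff, Pi.one_def] using memAS_rpow 0
  | succ k ih =>
    rw [chainCoeff_self_succ]
    convert ih.mul (hg.deriv hs).inv using 1
    push_cast
    ring

lemma deriv_sum_mul_iteratedDeriv (q : ℕ → ℝ → ℝ) (hq : ∀ j, q j ∈ eventuallySmooth)
    (hf : f ∈ eventuallySmooth) (n : ℕ) :
    deriv (∑ j ∈ range n, q j * iteratedDeriv j f) =ᶠ[atTop]
      ∑ j ∈ range n, (deriv (q j) * iteratedDeriv j f + q j * iteratedDeriv (j + 1) f) := by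
  have hdiff : ∀ᶠ x in atTop, ∀ j ∈ range n,
      DifferentiableAt ℝ (q j) x ∧ DifferentiableAt ℝ (iteratedDeriv j f) x :=
    (eventually_all_finset _).2 fun j _ => (differentiableAt_of_mem_eventuallySmooth (hq j)).and
      (differentiableAt_of_mem_eventuallySmooth (iteratedDeriv_mem_eventuallySmooth hf j))
  filter_upwards [hdiff] with x hx
  rw [deriv_sum fun j hj => (hx j hj).1.mul (hx j hj).2, Finset.sum_apply]
  refine sum_congr rfl fun j hj => ?_
  rw [deriv_mul (hx j hj).1 (hx j hj).2, iteratedDeriv_succ]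
  rfl

lemma sum_chainCoeff_succ (g φ : ℝ → ℝ) {k n : ℕ} (hk : k < n) :
    ∑ j ∈ range (n + 1), chainCoeff g (k + 1) j * iteratedDeriv j φ =
      (∑ j ∈ range (n + 1), (deriv (chainCoeff g k j) * iteratedDeriv j φ +
        chainCoeff g k j * iteratedDeriv (j + 1) φ)) * (deriv g)⁻¹ := by
  rw [sum_range_succ', chainCoeff, zero_mul, add_zero, sum_add_distrib, sum_range_succ',
    deriv_chainCoeff_zero_right, zero_mul, add_zero, sum_range_succ _ n,
    chainCoeff_eq_zero_of_lt g hk, zero_mul, add_zero, ← sum_add_distrib, sum_mul]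
  refine sum_congr rfl fun j _ => ?_
  rw [chainCoeff]
  ring

lemma iteratedDeriv_comp_eventuallyEq (hf : f ∈ eventuallySmooth) (hg : g ∈ eventuallySmooth)
    (hg' : ∀ᶠ x in atTop, deriv g x ≠ 0) (hgtop : Tendsto g atTop atTop) {k n : ℕ} (hk : k ≤ n) :
    iteratedDeriv k f ∘ g =ᶠ[atTop]
      ∑ j ∈ range (n + 1), chainCoeff g k j * iteratedDeriv j (f ∘ g) := by
  induction k with
  | zero => simp [sum_range_succ', chainCoeff]
  | succ k ih =>
    have hchain : deriv (iteratedDeriv k f ∘ g) =ᶠ[atTop]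
        (iteratedDeriv (k + 1) f ∘ g) * deriv g :=
      iteratedDeriv_succ (f := f) ▸ deriv_comp_eventuallyEq
        (differentiableAt_of_mem_eventuallySmooth (iteratedDeriv_mem_eventuallySmooth hf k))
        (differentiableAt_of_mem_eventuallySmooth hg) hgtop
    have hsum := deriv_sum_mul_iteratedDeriv (chainCoeff g k)
      (chainCoeff_mem_eventuallySmooth hg hg' k) (comp_mem_eventuallySmooth hf hg hgtop) (n + 1)
    filter_upwards [hchain, eventuallyEq_atTop_deriv (ih (Nat.le_of_succ_le hk)), hsum, hg']
      with x hchain hih hsum hg'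
    rw [sum_chainCoeff_succ g _ hk, Pi.mul_apply, ← hsum, ← hih, hchain, Pi.mul_apply,
      Pi.inv_apply, mul_inv_cancel_right₀ hg']

lemma iteratedDeriv_comp_eventuallyEq_sum_Icc (hf : f ∈ eventuallySmooth)
    (hg : g ∈ eventuallySmooth) (hg' : ∀ᶠ x in atTop, deriv g x ≠ 0)
    (hgtop : Tendsto g atTop atTop) {k n : ℕ} (hk : k ∈ Icc 1 n) :
    iteratedDeriv k f ∘ g =ᶠ[atTop]
      ∑ j ∈ Icc 1 n, chainCoeff g k j * iteratedDeriv j (f ∘ g) := by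
  obtain ⟨hk1, hkn⟩ := mem_Icc.1 hk
  obtain ⟨k, rfl⟩ := Nat.exists_eq_succ_of_ne_zero (Nat.one_le_iff_ne_zero.1 hk1)
  convert iteratedDeriv_comp_eventuallyEq hf hg hg' hgtop hkn using 1
  refine sum_subset (fun j hj => ?_) fun j hj hj1 => ?_
  · grind
  · obtain rfl : j = 0 := by grind
    rw [chainCoeff, zero_mul]

end ChainCoeff

/-- The coefficients `P_j` of the equation `φ = ∑ P_j φ^{(j)}` for `φ = f ∘ g`, when
`f = ∑ p_k f^{(k)}` with `1 ≤ j, k ≤ m`. -/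
def compCoeff (m : ℕ) (p : ℕ → ℝ → ℝ) (g : ℝ → ℝ) (j : ℕ) : ℝ → ℝ :=
  ∑ k ∈ Icc 1 m, (p k ∘ g) * chainCoeff g k j

section CompCoeff

variable {m : ℕ} {p : ℕ → ℝ → ℝ} {f g : ℝ → ℝ}

lemma comp_eventuallyEq_sum_compCoeff (hf : f ∈ eventuallySmooth)
    (heq : ∀ᶠ x in atTop, f x = ∑ k ∈ Icc 1 m, p k x * iteratedDeriv k f x)
    (hg : g ∈ eventuallySmooth) (hg' : ∀ᶠ x in atTop, deriv g x ≠ 0)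
    (hgtop : Tendsto g atTop atTop) :
    ∀ᶠ x in atTop, f (g x) =
      ∑ j ∈ Icc 1 m, compCoeff m p g j x * iteratedDeriv j (f ∘ g) x := by
  have hchain : ∀ᶠ x in atTop, ∀ k ∈ Icc 1 m, iteratedDeriv k f (g x) =
      ∑ j ∈ Icc 1 m, chainCoeff g k j x * iteratedDeriv j (f ∘ g) x :=
    (eventually_all_finset _).2 fun k hk => by
      filter_upwards [iteratedDeriv_comp_eventuallyEq_sum_Icc hf hg hg' hgtop hk] with x hx
      simpa using hx
  filter_upwards [hgtop.eventually heq, hchain] with x hx hchain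
  calc f (g x)
      = ∑ k ∈ Icc 1 m, ∑ j ∈ Icc 1 m,
          p k (g x) * chainCoeff g k j x * iteratedDeriv j (f ∘ g) x := by
        rw [hx]
        refine sum_congr rfl fun k hk => ?_
        simp only [hchain k hk, mul_sum, mul_assoc]
    _ = ∑ j ∈ Icc 1 m, compCoeff m p g j x * iteratedDeriv j (f ∘ g) x := by
        rw [sum_comm]
        simp only [compCoeff, Finset.sum_apply, Pi.mul_apply, Function.comp_apply, sum_mul]

lemma compCoeff_mem_classicalSymbol {s : ℕ} (hp : ∀ k ∈ Icc 1 m, p k ∈ classicalSymbol k)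
    (hg : MemAS s g) (hgtop : Tendsto g atTop atTop) (j : ℕ) :
    compCoeff m p g j ∈ classicalSymbol j := by
  refine sum_mem fun k hk => ?_
  convert mul_mem_classicalSymbol (comp_mem_classicalSymbol (hp k hk) hg hgtop)
    (chainCoeff_mem_classicalSymbol (hg.ne_zero_of_tendsto_atTop hgtop) hg k j) using 2
  ring

lemma compCoeff_self (hm : 0 < m) (p : ℕ → ℝ → ℝ) (g : ℝ → ℝ) :
    compCoeff m p g m = (p m ∘ g) * chainCoeff g m m := by
  refine sum_eq_single_of_mem m (mem_Icc.2 ⟨hm, le_rfl⟩) fun k hk hkm => ?_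
  rw [chainCoeff_eq_zero_of_lt g (lt_of_le_of_ne (mem_Icc.1 hk).2 hkm), mul_zero]

lemma exists_memAS_compCoeff_self {s : ℕ} (hm : 0 < m) (hp : ∃ i : ℤ, i ≤ m ∧ MemAS i (p m))
    (hg : MemAS s g) (hgtop : Tendsto g atTop atTop) :
    ∃ i : ℤ, i ≤ m ∧ MemAS i (compCoeff m p g m) := by
  obtain ⟨i, him, hi⟩ := hp
  refine ⟨s * i + (m - m * s), by nlinarith, ?_⟩
  rw [compCoeff_self hm]
  exact_mod_cast (hi.comp hg hgtop).mul
    (memAS_chainCoeff_self (hg.ne_zero_of_tendsto_atTop hgtop) hg m)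

end CompCoeff

theorem composition_mem_B_general (m : ℕ) (hm : 0 < m) (f : ℝ → ℝ) (hf : MemB m f)
    (s : ℕ) (g : ℝ → ℝ) (hg : MemAS (s : ℝ) g) (hgtop : Tendsto g atTop atTop) :
    MemB m (fun x => f (g x)) := by
  obtain ⟨hf, p, heq, hp, hpm⟩ := memB_iff.1 hf
  have hgs : g ∈ eventuallySmooth := (classicalSymbol_le_symbolClass _ hg.mem_classicalSymbol).1
  have hg' := (hg.deriv (hg.ne_zero_of_tendsto_atTop hgtop)).eventually_ne_zero
  exact memB_iff.2 ⟨comp_mem_eventuallySmooth hf hgs hgtop, compCoeff m p g,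
    comp_eventuallyEq_sum_compCoeff hf heq hgs hg' hgtop,
    fun j _ => compCoeff_mem_classicalSymbol hp hg hgtop j,
    exists_memAS_compCoeff_self hm hpm hg hgtop⟩

/-- If `f ∈ B^(m)` (`m` a positive integer) and `g ∈ X^(s)` strictly for a
positive integer `s`, with `g(x) > 0` for all large `x` and `g(x) → +∞`, then
`φ(x) = f(g(x))` belongs to `B^(m)` as well. -/
theorem composition_mem_B (m : ℕ) (hm : 0 < m) (f : ℝ → ℝ) (hf : MemB m f)
    (s : ℕ) (hs : 0 < s) (g : ℝ → ℝ) (hg : MemXS (s : ℝ) g)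
    (hgpos : ∀ᶠ x in atTop, 0 < g x)
    (hgtop : Tendsto g atTop atTop) :
    MemB m (fun x => f (g x)) := by
  exact composition_mem_B_general m hm f hf s g hg.1 hgtop
end
end

section
/- If α ∈ A^(γ) strictly, and β ∈ A^(k) strictly for some positive integer k with β(x) > 0 for all large x > 0, then the composition θ(x) = α(β(x)) belongs to A^(kγ) strictly. -/
open Filter Finset Real

noncomputable section

/-!
With `u(y) = y ^ (-γ) α(y)` and `v(x) = x ^ (-k) β(x)`, one has
`x ^ (-kγ) α(β(x)) = v(x) ^ γ u(x ^ k v(x))`, where `u` and `v` expand in powers of the reciprocal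
variable and `v → b₀ > 0`. The first factor expands because `y ^ γ` is analytic at `b₀`. The second
does because `1 / β = x ^ (-k) v⁻¹` again expands in powers of `1 / x` (this is where `k` has to be
an integer), while the remainders are symbols in the sense of Hörmander and survive the substitution
by the chain rule. The leading coefficient is `α₀ b₀ ^ γ`.
-/

open Asymptotics Topology
open scoped ContDiff

section Symbol

variable {E : Type*} [NormedAddCommGroup E] [NormedSpace ℝ E]

lemma eventuallyEq_nhds_of_eventuallyEq_atTop {F : Type*} {f g : ℝ → F} (h : f =ᶠ[atTop] g) :
    ∀ᶠ x in atTop, f =ᶠ[𝓝 x] g := by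
  obtain ⟨a, ha⟩ := eventually_atTop.1 h
  filter_upwards [eventually_gt_atTop a] with x hx
  filter_upwards [Ioi_mem_nhds hx] with y hy using ha y (le_of_lt hy)

lemma iteratedDeriv_eventuallyEq_atTop {f g : ℝ → E} (h : f =ᶠ[atTop] g) (n : ℕ) :
    iteratedDeriv n f =ᶠ[atTop] iteratedDeriv n g :=
  (eventuallyEq_nhds_of_eventuallyEq_atTop h).mono fun _ hx => hx.iteratedDeriv_eq n

lemma isBigO_rpow_rpow_atTop_of_le {m m' : ℝ} (h : m ≤ m') :
    (fun x : ℝ => x ^ m) =O[atTop] fun x : ℝ => x ^ m' := by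
  refine IsBigO.of_bound' ?_
  filter_upwards [eventually_ge_atTop 1] with x hx
  rw [norm_of_nonneg (by positivity), norm_of_nonneg (by positivity)]
  exact rpow_le_rpow_of_exponent_le hx h

lemma isBigO_smul_rpow {a b : ℝ} {f : ℝ → ℝ} {g : ℝ → E} (hf : f =O[atTop] fun x => x ^ a)
    (hg : g =O[atTop] fun x => x ^ b) :
    (fun x => f x • g x) =O[atTop] fun x : ℝ => x ^ (a + b) := by
  refine (hf.smul hg).congr' .rfl ?_
  filter_upwards [eventually_gt_atTop 0] with x hx
  rw [smul_eq_mul, rpow_add hx]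

lemma isBigO_iteratedDeriv_smul {n : ℕ} {a b : ℝ} {f : ℝ → ℝ} {g : ℝ → E}
    (hf : ∀ᶠ x in atTop, ContDiffAt ℝ n f x) (hg : ∀ᶠ x in atTop, ContDiffAt ℝ n g x)
    (hfO : ∀ i ≤ n, iteratedDeriv i f =O[atTop] fun x => x ^ (a - i))
    (hgO : ∀ i ≤ n, iteratedDeriv i g =O[atTop] fun x => x ^ (b - i)) :
    iteratedDeriv n (f • g) =O[atTop] fun x : ℝ => x ^ (a + b - n) := by
  have leibniz : iteratedDeriv n (f • g) =ᶠ[atTop] fun x => ∑ i ∈ range (n + 1),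
      n.choose i • iteratedDeriv i f x • iteratedDeriv (n - i) g x := by
    filter_upwards [hf, hg] with x hfx hgx
    simpa only [iteratedDerivWithin_univ] using iteratedDerivWithin_smul (Set.mem_univ x)
      uniqueDiffOn_univ hfx.contDiffWithinAt hgx.contDiffWithinAt
  refine (IsBigO.fun_sum fun i hi => ?_).congr' leibniz.symm .rfl
  have hin : i ≤ n := Nat.lt_succ_iff.1 (mem_range.1 hi)
  have hexp : a - i + (b - (n - i : ℕ)) = a + b - n := by push_cast [hin]; ring
  simp_rw [← Nat.cast_smul_eq_nsmul ℝ]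
  exact hexp ▸ (isBigO_smul_rpow (hfO i hin) (hgO (n - i) (n.sub_le i))).const_smul_left _

/-- Symbols of order `m` at `+∞` (in the sense of Hörmander's class `S^m`, for a single real
variable): each derivative is `O` of the corresponding derivative of `x ^ m`. -/
def IsSymbol (m : ℝ) (f : ℝ → E) : Prop :=
  (∀ᶠ x in atTop, ContDiffAt ℝ ∞ f x) ∧
    ∀ j : ℕ, iteratedDeriv j f =O[atTop] fun x : ℝ => x ^ (m - j)

namespace IsSymbol

variable {m m' : ℝ} {f g : ℝ → E}

lemma congr (hf : IsSymbol m f) (h : f =ᶠ[atTop] g) : IsSymbol m g := by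
  refine ⟨?_, fun j => (hf.2 j).congr' (iteratedDeriv_eventuallyEq_atTop h j) .rfl⟩
  filter_upwards [hf.1, eventuallyEq_nhds_of_eventuallyEq_atTop h] with x hfx hx
  exact hfx.congr_of_eventuallyEq hx.symm

lemma isBigO (hf : IsSymbol m f) : f =O[atTop] fun x => x ^ m := by
  simpa using hf.2 0

lemma mono (hf : IsSymbol m f) (h : m ≤ m') : IsSymbol m' f :=
  ⟨hf.1, fun j => (hf.2 j).trans (isBigO_rpow_rpow_atTop_of_le (sub_le_sub_right h j))⟩

lemma add (hf : IsSymbol m f) (hg : IsSymbol m g) : IsSymbol m (f + g) := by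
  refine ⟨?_, fun j => ((hf.2 j).add (hg.2 j)).congr' ?_ .rfl⟩
  · filter_upwards [hf.1, hg.1] with x hfx hgx using hfx.add hgx
  · filter_upwards [hf.1, hg.1] with x hfx hgx
    exact (iteratedDeriv_add (hfx.of_le (mod_cast le_top)) (hgx.of_le (mod_cast le_top))).symm

lemma smul {φ : ℝ → ℝ} (hφ : IsSymbol m φ) (hf : IsSymbol m' f) : IsSymbol (m + m') (φ • f) := by
  refine ⟨?_, fun j => isBigO_iteratedDeriv_smul (hφ.1.mono fun x hx => hx.of_le (mod_cast le_top))
    (hf.1.mono fun x hx => hx.of_le (mod_cast le_top)) (fun i _ => hφ.2 i) fun i _ => hf.2 i⟩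
  filter_upwards [hφ.1, hf.1] with x hφx hfx using hφx.smul hfx

lemma const (c : E) : IsSymbol 0 fun _ => c := by
  refine ⟨.of_forall fun _ => contDiffAt_const, fun j => ?_⟩
  rcases j.eq_zero_or_pos with rfl | hj
  · simpa using isBigO_const_one ℝ c (atTop : Filter ℝ)
  · exact (isBigO_zero _ _).congr_left fun x => by rw [iteratedDeriv_const, if_neg hj.ne']

lemma rpow (s : ℝ) : IsSymbol s fun x => x ^ s := by
  refine ⟨?_, fun j => ?_⟩
  · filter_upwards [eventually_gt_atTop 0] with x hx using contDiffAt_rpow_const_of_ne hx.ne'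
  · rw [iteratedDeriv_eq_iterate]
    simp_rw [funext fun x => iter_deriv_rpow_const s x j]
    exact (isBigO_refl _ _).const_mul_left _

lemma pow (n : ℕ) : IsSymbol n fun x => x ^ n := by
  simpa only [rpow_natCast] using rpow n

lemma inv : IsSymbol (-1) fun x => x⁻¹ := by
  simpa only [rpow_neg_one] using rpow (-1)

lemma rpow_smul_iff {s : ℝ} : IsSymbol (s + m) (fun x => x ^ s • f x) ↔ IsSymbol m f := by
  refine ⟨fun h => ?_, fun h => (rpow s).smul h⟩
  have key := (rpow (-s)).smul h
  rw [neg_add_cancel_left] at key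
  refine key.congr ?_
  filter_upwards [eventually_gt_atTop 0] with x hx
  simp [smul_smul, ← rpow_add hx]

/-- The case `k = s = 0` covers outer functions smooth near a finite limit of `φ`; the case
`s = k * m` covers outer symbols of order `m`. -/
lemma comp_of_isBigO {k s : ℝ} {φ : ℝ → ℝ} (hφ : IsSymbol k φ)
    (hf : ∀ᶠ x in atTop, ContDiffAt ℝ ∞ f (φ x))
    (hO : ∀ j : ℕ, (iteratedDeriv j f ∘ φ) =O[atTop] fun x => x ^ (s - k * j)) :
    IsSymbol s (f ∘ φ) := by
  refine ⟨?_, fun n => ?_⟩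
  · filter_upwards [hf, hφ.1] with x hfx hφx using hfx.comp x hφx
  induction n using Nat.strong_induction_on generalizing f s with
  | _ n ih =>
    rcases n with _ | n
    · simpa using hO 0
    have chain : deriv (f ∘ φ) =ᶠ[atTop] deriv φ • (deriv f ∘ φ) := by
      filter_upwards [hf, hφ.1] with x hfx hφx
      exact deriv.scomp x (hfx.differentiableAt (by simp)) (hφx.differentiableAt (by simp))
    have hf' : ∀ᶠ x in atTop, ContDiffAt ℝ ∞ (deriv f) (φ x) :=
      hf.mono fun x hx => hx.derivWithin (by simp)
    have hφ' : ∀ᶠ x in atTop, ContDiffAt ℝ ∞ (deriv φ) x :=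
      hφ.1.mono fun x hx => hx.derivWithin (by simp)
    have hf'φ : ∀ i ≤ n, iteratedDeriv i (deriv f ∘ φ) =O[atTop] fun x => x ^ (s - k - i) := by
      refine fun i hi => ih i (Nat.lt_succ_of_le hi) hf' fun j => ?_
      have hj := hO (j + 1)
      rwa [iteratedDeriv_succ', show s - k * (j + 1 : ℕ) = s - k - k * j by push_cast; ring] at hj
    have hφ'O : ∀ i ≤ n, iteratedDeriv i (deriv φ) =O[atTop] fun x => x ^ (k - 1 - i) := by
      intro i _
      have hi := hφ.2 (i + 1)
      rwa [iteratedDeriv_succ', show k - (i + 1 : ℕ) = k - 1 - i by push_cast; ring] at hi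
    rw [iteratedDeriv_succ', show s - (n + 1 : ℕ) = k - 1 + (s - k) - n by push_cast; ring]
    refine (isBigO_iteratedDeriv_smul ?_ ?_ hφ'O hf'φ).congr'
      (iteratedDeriv_eventuallyEq_atTop chain.symm n) .rfl
    · exact hφ'.mono fun x hx => hx.of_le (mod_cast le_top)
    · filter_upwards [hf', hφ.1] with x hfx hφx
      exact (hfx.comp x hφx).of_le (mod_cast le_top)

lemma comp {k : ℝ} {φ : ℝ → ℝ} (hf : IsSymbol m f) (hφ : IsSymbol k φ)
    (htop : Tendsto φ atTop atTop) (hle : (fun x => x ^ k) =O[atTop] φ) :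
    IsSymbol (k * m) (f ∘ φ) := by
  refine hφ.comp_of_isBigO (htop.eventually hf.1) fun j => ?_
  have hpow : (fun x => φ x ^ (m - j)) =Θ[atTop] fun x => (x ^ k) ^ (m - j) :=
    IsTheta.rpow (htop.eventually_ge_atTop 0)
      ((eventually_ge_atTop 0).mono fun x hx => rpow_nonneg hx k) ⟨hφ.isBigO, hle⟩
  refine (((hf.2 j).comp_tendsto htop).trans hpow.isBigO).congr' .rfl ?_
  filter_upwards [eventually_ge_atTop 0] with x hx
  rw [← rpow_mul hx, mul_sub]

lemma comp_analyticAt [CompleteSpace E] {φ : ℝ → ℝ} {b : ℝ} (hφ : IsSymbol 0 φ)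
    (hb : Tendsto φ atTop (𝓝 b)) (hf : AnalyticAt ℝ f b) : IsSymbol 0 (f ∘ φ) := by
  refine hφ.comp_of_isBigO
    ((hb.eventually hf.eventually_analyticAt).mono fun x hx => hx.contDiffAt) fun j => ?_
  simp only [zero_mul, sub_zero, rpow_zero, iteratedDeriv_eq_iterate]
  exact ((hf.iterated_deriv j).continuousAt.tendsto.comp hb).isBigO_one ℝ

end IsSymbol

end Symbol

section Expansion

variable {E : Type*} [NormedAddCommGroup E] [NormedSpace ℝ E]

/-- `f` expands to order `N` in powers of `1 / x` as `x → ∞`, with a symbol as remainder.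
The recursion on `f(x) = c + x⁻¹ g(x)` peels off one coefficient at a time, so that closure
properties are proved by induction on `N` without naming the coefficients. -/
def ExpandsToOrder : ℕ → (ℝ → E) → Prop
  | 0, f => IsSymbol 0 f
  | N + 1, f => ∃ (c : E) (g : ℝ → E), ExpandsToOrder N g ∧ f =ᶠ[atTop] fun x => c + x⁻¹ • g x

namespace ExpandsToOrder

variable {N : ℕ} {f g : ℝ → E} {φ : ℝ → ℝ}

lemma congr (hf : ExpandsToOrder N f) (h : f =ᶠ[atTop] g) : ExpandsToOrder N g := by
  cases N with
  | zero => exact IsSymbol.congr hf h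
  | succ N =>
    obtain ⟨c, r, hr, hfr⟩ := hf
    exact ⟨c, r, hr, h.symm.trans hfr⟩

lemma of_succ (hf : ExpandsToOrder (N + 1) f) : ExpandsToOrder N f := by
  induction N generalizing f with
  | zero =>
    obtain ⟨c, r, hr, hfr⟩ := hf
    have hrem : IsSymbol 0 ((fun x : ℝ => x⁻¹) • r) :=
      (IsSymbol.inv.smul hr).mono (by norm_num)
    exact ((IsSymbol.const c).add hrem).congr hfr.symm
  | succ N ih =>
    obtain ⟨c, r, hr, hfr⟩ := hf
    exact ⟨c, r, ih hr, hfr⟩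

lemma isSymbol (hf : ExpandsToOrder N f) : IsSymbol 0 f := by
  induction N with
  | zero => exact hf
  | succ N ih => exact ih hf.of_succ

lemma const_add_inv_smul (c : E) (hf : ExpandsToOrder N f) :
    ExpandsToOrder (N + 1) fun x => c + x⁻¹ • f x :=
  ⟨c, f, hf, .rfl⟩

lemma const (c : E) : ExpandsToOrder N fun _ => c := by
  induction N generalizing c with
  | zero => exact IsSymbol.const c
  | succ N ih => simpa using const_add_inv_smul c (ih 0)

lemma inv_pow (n : ℕ) : ExpandsToOrder N fun x => (x⁻¹) ^ n := by
  induction n generalizing N with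
  | zero => simpa using const (1 : ℝ)
  | succ n ih =>
    refine of_succ ?_
    simpa [pow_succ'] using const_add_inv_smul 0 (ih (N := N))

lemma add (hf : ExpandsToOrder N f) (hg : ExpandsToOrder N g) : ExpandsToOrder N (f + g) := by
  induction N generalizing f g with
  | zero => exact IsSymbol.add hf hg
  | succ N ih =>
    obtain ⟨c, r, hr, hfr⟩ := hf
    obtain ⟨d, s, hs, hgs⟩ := hg
    refine (const_add_inv_smul (c + d) (ih hr hs)).congr ?_
    filter_upwards [hfr, hgs] with x hfx hgx
    rw [Pi.add_apply, Pi.add_apply, hfx, hgx]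
    module

lemma smul (hφ : ExpandsToOrder N φ) (hf : ExpandsToOrder N f) : ExpandsToOrder N (φ • f) := by
  induction N generalizing φ f with
  | zero => exact (IsSymbol.smul hφ hf).mono (add_zero _).le
  | succ N ih =>
    have hfN := hf.of_succ
    obtain ⟨a, ρ, hρ, hφρ⟩ := hφ
    obtain ⟨c, r, hr, hfr⟩ := hf
    refine (const_add_inv_smul (a • c) ((ih (const a) hr).add (ih hρ hfN))).congr ?_
    filter_upwards [hφρ, hfr] with x hφx hfx
    simp only [Pi.add_apply, Pi.smul_apply', hφx, hfx]
    module

lemma tendsto_const_add_inv_smul (c : E) (hg : ExpandsToOrder N g) :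
    Tendsto (fun x => c + x⁻¹ • g x) atTop (𝓝 c) := by
  have hbdd : g =O[atTop] fun _ => (1 : ℝ) := by simpa using hg.isSymbol.isBigO
  have hrem : Tendsto (fun x => x⁻¹ • g x) atTop (𝓝 0) :=
    tendsto_inv_atTop_zero.zero_smul_isBoundedUnder_le ((isBigO_one_iff ℝ).1 hbdd)
  simpa using hrem.const_add c

lemma comp_analyticAt [CompleteSpace E] {b : ℝ} (hφ : ExpandsToOrder N φ)
    (hb : Tendsto φ atTop (𝓝 b)) (hf : AnalyticAt ℝ f b) : ExpandsToOrder N (f ∘ φ) := by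
  induction N generalizing f with
  | zero => exact IsSymbol.comp_analyticAt hφ hb hf
  | succ N ih =>
    have hslope : AnalyticAt ℝ (dslope f b) b :=
      let ⟨_, hp⟩ := hf
      ⟨_, hp.has_fpower_series_dslope_fslope⟩
    have hquot := ih hφ.of_succ hslope
    obtain ⟨c, ρ, hρ, hφρ⟩ := hφ
    have hcb : c = b :=
      tendsto_nhds_unique ((tendsto_const_add_inv_smul c hρ).congr' hφρ.symm) hb
    refine (const_add_inv_smul (f b) (hρ.smul hquot)).congr ?_
    filter_upwards [hφρ] with x hx
    have hdiff : x⁻¹ * ρ x = φ x - b := by rw [hx, hcb]; ring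
    rw [Pi.smul_apply', smul_smul, hdiff, Function.comp_apply, Function.comp_apply,
      sub_smul_dslope, add_sub_cancel]

lemma comp_pow_mul {k : ℕ} (hk : 0 < k) {b : ℝ} (hb : 0 < b) (hf : ExpandsToOrder N f)
    (hφ : ExpandsToOrder N φ) (hφb : Tendsto φ atTop (𝓝 b)) :
    ExpandsToOrder N fun x => f (x ^ k * φ x) := by
  have htop : Tendsto (fun x => x ^ k * φ x) atTop atTop :=
    (tendsto_pow_atTop hk.ne').atTop_mul_pos hb hφb
  induction N generalizing f with
  | zero =>
    have hsymb : IsSymbol (k : ℝ) fun x => x ^ k * φ x :=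
      ((IsSymbol.pow k).smul hφ).mono (add_zero _).le
    have hle : (fun x : ℝ => x ^ (k : ℝ)) =O[atTop] fun x => x ^ k * φ x := by
      refine (isTheta_of_div_tendsto_nhds_ne_zero (hφb.congr' ?_) hb.ne').isBigO
      filter_upwards [eventually_gt_atTop 0] with x hx
      rw [rpow_natCast, mul_div_cancel_left₀ _ (pow_ne_zero k hx.ne')]
    exact (IsSymbol.comp hf hsymb htop hle).mono (mul_zero _).le
  | succ N ih =>
    obtain ⟨c, r, hr, hfr⟩ := hf
    have hφinv : ExpandsToOrder N fun x => (φ x)⁻¹ :=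
      hφ.of_succ.comp_analyticAt hφb (analyticAt_inv hb.ne')
    refine (const_add_inv_smul c
      ((inv_pow (k - 1)).smul (hφinv.smul (ih hr hφ.of_succ)))).congr ?_
    filter_upwards [htop.eventually hfr] with x hx
    simp only [Pi.smul_apply', hx, smul_smul, mul_inv, ← _root_.inv_pow, ← mul_assoc,
      mul_pow_sub_one hk.ne']

end ExpandsToOrder

/-- `f(x) ~ ∑ i, x⁻ⁱ c i` as `x → ∞`, where the expansion may be differentiated term by term. -/
def HasExpansion (c : ℕ → E) (f : ℝ → E) : Prop :=
  ∀ N : ℕ, IsSymbol (-N) fun x => f x - ∑ i ∈ range N, (x⁻¹) ^ i • c i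

lemma expandsToOrder_of_isSymbol_sub {N : ℕ} {c : ℕ → E} {f : ℝ → E}
    (h : IsSymbol (-N) fun x => f x - ∑ i ∈ range N, (x⁻¹) ^ i • c i) : ExpandsToOrder N f := by
  induction N generalizing c f with
  | zero => exact show IsSymbol 0 f by simpa using h
  | succ N ih =>
    have hrem : IsSymbol (-N) fun x =>
        x • (f x - c 0) - ∑ i ∈ range N, (x⁻¹) ^ i • c (i + 1) := by
      have hsymb := (IsSymbol.pow 1).smul h
      rw [show ((1 : ℕ) : ℝ) + -(N + 1 : ℕ) = -N by push_cast; ring] at hsymb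
      refine hsymb.congr ?_
      filter_upwards [eventually_gt_atTop 0] with x hx
      have hterm (i : ℕ) : x * (x⁻¹) ^ (i + 1) = (x⁻¹) ^ i := by
        rw [pow_succ', mul_inv_cancel_left₀ hx.ne']
      simp only [Pi.smul_apply', pow_one, sum_range_succ', pow_zero, one_smul, smul_sub, smul_add,
        smul_sum, smul_smul, hterm]
      abel
    refine (ExpandsToOrder.const_add_inv_smul (c 0) (ih hrem)).congr ?_
    filter_upwards [eventually_gt_atTop 0] with x hx
    rw [inv_smul_smul₀ hx.ne', add_sub_cancel]

lemma HasExpansion.expandsToOrder {c : ℕ → E} {f : ℝ → E} (h : HasExpansion c f) (N : ℕ) :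
    ExpandsToOrder N f :=
  expandsToOrder_of_isSymbol_sub (h N)

lemma HasExpansion.tendsto {c : ℕ → E} {f : ℝ → E} (h : HasExpansion c f) :
    Tendsto f atTop (𝓝 (c 0)) := by
  have hO : (fun x => f x - c 0) =O[atTop] fun x => x ^ (-1 : ℝ) := by simpa using (h 1).isBigO
  exact tendsto_sub_nhds_zero_iff.1 (hO.trans_tendsto (tendsto_rpow_neg_atTop one_pos))

lemma exists_const_add_inv_smul_of_forall_expandsToOrder {f : ℝ → E}
    (hf : ∀ N, ExpandsToOrder N f) :
    ∃ (c : E) (g : ℝ → E), (∀ N, ExpandsToOrder N g) ∧ f =ᶠ[atTop] fun x => c + x⁻¹ • g x := by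
  choose c g hg hfg using fun N => hf (N + 1)
  have hc : ∀ N, Tendsto f atTop (𝓝 (c N)) := fun N =>
    (ExpandsToOrder.tendsto_const_add_inv_smul (c N) (hg N)).congr' (hfg N).symm
  refine ⟨c 0, g 0, fun N => (hg N).congr ?_, hfg 0⟩
  filter_upwards [hfg N, hfg 0, eventually_gt_atTop 0] with x hN h0 hx
  rw [hN, tendsto_nhds_unique (hc N) (hc 0), add_right_inj] at h0
  exact (smul_right_inj (inv_ne_zero hx.ne')).1 h0

lemma exists_hasExpansion_of_forall_expandsToOrder {f : ℝ → E} (hf : ∀ N, ExpandsToOrder N f) :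
    ∃ c, HasExpansion c f := by
  let S := {g : ℝ → E // ∀ N, ExpandsToOrder N g}
  have hstep : ∀ g : S, ∃ (c : E) (r : S), g.1 =ᶠ[atTop] fun x => c + x⁻¹ • r.1 x := fun g =>
    let ⟨c, r, hr, hgr⟩ := exists_const_add_inv_smul_of_forall_expandsToOrder g.2
    ⟨c, ⟨r, hr⟩, hgr⟩
  choose c r hr using hstep
  let f₀ : S := ⟨f, hf⟩
  have hrem : ∀ N, (fun x => f x - ∑ i ∈ range N, (x⁻¹) ^ i • c (r^[i] f₀)) =ᶠ[atTop]
      fun x => (x⁻¹) ^ N • (r^[N] f₀).1 x := by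
    intro N
    induction N with
    | zero => exact .of_forall fun x => by simp [f₀]
    | succ N ih =>
      filter_upwards [ih, hr (r^[N] f₀)] with x hx hNx
      rw [sum_range_succ, ← sub_sub, hx, hNx, Function.iterate_succ_apply']
      module
  refine ⟨fun i => c (r^[i] f₀), fun N => ?_⟩
  have hsymb := (IsSymbol.rpow (-N)).smul ((r^[N] f₀).2 0)
  rw [add_zero] at hsymb
  refine hsymb.congr (EventuallyEq.trans ?_ (hrem N).symm)
  filter_upwards [eventually_ge_atTop 0] with x hx
  rw [Pi.smul_apply', rpow_neg hx, rpow_natCast, inv_pow]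

end Expansion

section HasExpA

variable {γ : ℝ} {c : ℕ → ℝ} {α : ℝ → ℝ}

lemma contDiffAt_sum_mul_rpow (γ : ℝ) (c : ℕ → ℝ) (N : ℕ) {x : ℝ} (hx : x ≠ 0) :
    ContDiffAt ℝ ∞ (fun x => ∑ i ∈ range N, c i * x ^ (γ - i)) x :=
  ContDiffAt.sum fun _ _ => contDiffAt_const.mul (contDiffAt_rpow_const_of_ne hx)

lemma iteratedDeriv_sum_mul_rpow (γ : ℝ) (c : ℕ → ℝ) (N j : ℕ) {x : ℝ} (hx : x ≠ 0) :
    iteratedDeriv j (fun x => ∑ i ∈ range N, c i * x ^ (γ - i)) x =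
      ∑ i ∈ range N, c i * (∏ l ∈ range j, (γ - i - l)) * x ^ (γ - i - j) := by
  rw [iteratedDeriv_fun_sum fun i _ => contDiffAt_const.mul (contDiffAt_rpow_const_of_ne hx)]
  refine sum_congr rfl fun i _ => ?_
  rw [iteratedDeriv_const_mul_field, iteratedDeriv_eq_iterate, iter_deriv_rpow_const,
    descPochhammer_eval_eq_prod_range, mul_assoc]

lemma exists_pos_forall_Ioi_iff_eventually_atTop {p : ℝ → Prop} :
    (∃ a : ℝ, 0 < a ∧ ∀ x ∈ Set.Ioi a, p x) ↔ ∀ᶠ x in atTop, p x := by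
  refine ⟨fun ⟨a, _, h⟩ => (eventually_gt_atTop a).mono h, fun h => ?_⟩
  obtain ⟨a, ha, h⟩ := (atTop_basis_Ioi' 0).eventually_iff.1 h
  exact ⟨a, ha, fun x hx => h hx⟩

lemma hasExpA_iff_isSymbol :
    HasExpA γ c α ↔ ∀ N : ℕ, IsSymbol (γ - N) fun x => α x - ∑ i ∈ range N, c i * x ^ (γ - i) := by
  have hiter (hα : ∀ᶠ x in atTop, ContDiffAt ℝ ∞ α x) (N j : ℕ) :
      iteratedDeriv j (fun x => α x - ∑ i ∈ range N, c i * x ^ (γ - i)) =ᶠ[atTop] fun x =>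
        iteratedDeriv j α x -
          ∑ i ∈ range N, c i * (∏ l ∈ range j, (γ - i - l)) * x ^ (γ - i - j) := by
    filter_upwards [hα, eventually_ne_atTop 0] with x hαx hx
    rw [iteratedDeriv_fun_sub (hαx.of_le (mod_cast le_top))
      ((contDiffAt_sum_mul_rpow γ c N hx).of_le (mod_cast le_top)),
      iteratedDeriv_sum_mul_rpow γ c N j hx]
  rw [HasExpA, exists_pos_forall_Ioi_iff_eventually_atTop]
  constructor
  · rintro ⟨hα, hO⟩ N
    refine ⟨?_, fun j => (hO j N).congr' (hiter hα N j).symm .rfl⟩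
    filter_upwards [hα, eventually_ne_atTop 0] with x hαx hx
    exact hαx.sub (contDiffAt_sum_mul_rpow γ c N hx)
  · intro h
    have hα : ∀ᶠ x in atTop, ContDiffAt ℝ ∞ α x := by simpa using (h 0).1
    exact ⟨hα, fun j N => ((h N).2 j).congr' (hiter hα N j) .rfl⟩

lemma hasExpA_iff_hasExpansion : HasExpA γ c α ↔ HasExpansion c fun x => x ^ (-γ) * α x := by
  rw [hasExpA_iff_isSymbol]
  refine forall_congr' fun N => ?_
  rw [← IsSymbol.rpow_smul_iff (s := -γ), show -γ + (γ - N) = -N by ring]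
  have hnorm : (fun x => x ^ (-γ) • (α x - ∑ i ∈ range N, c i * x ^ (γ - i))) =ᶠ[atTop]
      fun x => x ^ (-γ) * α x - ∑ i ∈ range N, (x⁻¹) ^ i • c i := by
    filter_upwards [eventually_gt_atTop 0] with x hx
    rw [smul_eq_mul, mul_sub, mul_sum]
    congr 1
    refine sum_congr rfl fun i _ => ?_
    rw [mul_left_comm, ← rpow_add hx, neg_add_eq_sub, sub_sub_cancel_left, rpow_neg hx.le,
      rpow_natCast, inv_pow, smul_eq_mul, mul_comm]
  exact ⟨fun h => h.congr hnorm, fun h => h.congr hnorm.symm⟩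

namespace HasExpA

lemma tendsto (h : HasExpA γ c α) : Tendsto (fun x => x ^ (-γ) * α x) atTop (𝓝 (c 0)) :=
  (hasExpA_iff_hasExpansion.1 h).tendsto

lemma coeff_zero_nonneg (h : HasExpA γ c α) (hpos : ∀ᶠ x in atTop, 0 < α x) : 0 ≤ c 0 := by
  refine ge_of_tendsto h.tendsto ?_
  filter_upwards [hpos, eventually_ge_atTop 0] with x hαx hx
  exact mul_nonneg (rpow_nonneg hx _) hαx.le

theorem comp {k : ℕ} (hk : 0 < k) {b : ℕ → ℝ} {β : ℝ → ℝ} (hα : HasExpA γ c α)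
    (hβ : HasExpA k b β) (hb : 0 < b 0) :
    ∃ d : ℕ → ℝ, d 0 = c 0 * b 0 ^ γ ∧ HasExpA (k * γ) d fun x => α (β x) := by
  set u : ℝ → ℝ := fun y => y ^ (-γ) * α y
  set v : ℝ → ℝ := fun x => x ^ (-k : ℝ) * β x
  have hu : HasExpansion c u := hasExpA_iff_hasExpansion.1 hα
  have hv : HasExpansion b v := hasExpA_iff_hasExpansion.1 hβ
  have hβv : ∀ᶠ x in atTop, x ^ k * v x = β x := by
    filter_upwards [eventually_gt_atTop 0] with x hx
    rw [← mul_assoc, rpow_neg hx.le, rpow_natCast, mul_inv_cancel₀ (pow_ne_zero k hx.ne'), one_mul]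
  have hvγ : AnalyticAt ℝ (fun y => y ^ γ) (b 0) :=
    (contDiffAt_rpow_const_of_ne hb.ne').analyticAt
  have hfactor : (fun x => v x ^ γ * u (x ^ k * v x)) =ᶠ[atTop]
      fun x => x ^ (-(k * γ)) * α (β x) := by
    filter_upwards [eventually_gt_atTop 0, hβv, hv.tendsto.eventually_const_lt hb]
      with x hx hβx hvx
    have hβγ : β x ^ (-γ) = x ^ (-(k * γ)) * v x ^ (-γ) := by
      rw [← hβx, mul_rpow (pow_nonneg hx.le k) hvx.le, ← rpow_natCast, ← rpow_mul hx.le, mul_neg]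
    have hcancel : v x ^ γ * v x ^ (-γ) = 1 := by rw [← rpow_add hvx, add_neg_cancel, rpow_zero]
    simp only [hβx, u, hβγ]
    linear_combination x ^ (-(k * γ)) * α (β x) * hcancel
  have hexp : ∀ N, ExpandsToOrder N fun x => x ^ (-(k * γ)) * α (β x) := fun N =>
    have hvN := hv.expandsToOrder N
    ((hvN.comp_analyticAt hv.tendsto hvγ).smul
      ((hu.expandsToOrder N).comp_pow_mul hk hb hvN hv.tendsto)).congr hfactor
  have htop : Tendsto (fun x => x ^ k * v x) atTop atTop :=
    (tendsto_pow_atTop hk.ne').atTop_mul_pos hb hv.tendsto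
  have hlim : Tendsto (fun x => x ^ (-(k * γ)) * α (β x)) atTop (𝓝 (b 0 ^ γ * c 0)) :=
    ((hvγ.continuousAt.tendsto.comp hv.tendsto).mul (hu.tendsto.comp htop)).congr' hfactor
  obtain ⟨d, hd⟩ := exists_hasExpansion_of_forall_expandsToOrder hexp
  exact ⟨d, (tendsto_nhds_unique hd.tendsto hlim).trans (mul_comm _ _),
    hasExpA_iff_hasExpansion.2 hd⟩

end HasExpA

end HasExpA

/-- If `α ∈ A^(γ)` strictly and `β ∈ A^(k)` strictly for a positive integer `k`
with `β(x) > 0` for all large `x > 0`, then `θ(x) = α(β(x))` belongs to `A^(kγ)` strictly. -/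
theorem memAS_comp (γ : ℝ) (α : ℝ → ℝ) (hα : MemAS γ α)
    (k : ℕ) (hk : 0 < k) (β : ℝ → ℝ) (hβ : MemAS (k : ℝ) β)
    (hpos : ∀ᶠ x in atTop, 0 < β x) :
    MemAS ((k : ℝ) * γ) (fun x => α (β x)) := by
  obtain ⟨a, ha0, ha⟩ := hα
  obtain ⟨b, hb0, hb⟩ := hβ
  have hbpos : 0 < b 0 := (hb.coeff_zero_nonneg hpos).lt_of_ne' hb0
  obtain ⟨d, hd0, hd⟩ := ha.comp hk hb hbpos
  exact ⟨d, hd0 ▸ mul_ne_zero ha0 (rpow_pos_of_pos hbpos γ).ne', hd⟩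
end
end

section
/- Let f be m times continuously differentiable and satisfy f(t) = Σ_{k=1}^m p_k(t) f^{(k)}(t) for all large t, and let g be infinitely differentiable for all large x with g(x) → +∞ as x → ∞. Suppose the functions π_1, …, π_m satisfy the upper triangular linear system p_k(g(x)) = Σ_{n=k}^m π_n(x) B_{n,k}(g'(x), g''(x), …, g^{(n−k+1)}(x)) for k = 1, …, m and all large x, where B_{n,k} is the Bell polynomial. Then φ(x) = f(g(x)) satisfies φ(x) = Σ_{n=1}^m π_n(x) φ^{(n)}(x) for all large x. Moreover, since the system is upper triangular with diagonal entries B_{k,k}(g'(x)) = (g'(x))^k, if g'(x) > 0 for all large x then functions π_1, …, π_m satisfying the system exist and are uniquely determined for all large x. -/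
open Filter Finset Real

noncomputable section

/-!
By Faà di Bruno's formula `(f ∘ g)^(n) = ∑ k, B_{n,k}(g', g'', …) f^(k) ∘ g`, so after exchanging
the order of summation the coefficient of `f^(k)(g(x))` in `∑ n, P_n(x) (f ∘ g)^(n)(x)` is exactly
the right-hand side of the `k`-th equation of the system. The matrix of that system is upper
triangular with determinant `∏ k, g'(x)^k`, hence invertible wherever `g'(x) ≠ 0`.

Mathlib states Faà di Bruno's formula as a sum over ordered partitions. The coefficient of `f^(k)`
in it does not depend on `f`, so it can be read off from `f = (· ^ k)` and a polynomial `g`, where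
it becomes a coefficient of `g ^ k` given by the multinomial theorem.
-/

section Polynomial

open Polynomial

theorem iteratedDeriv_polynomial_eval {𝕜 : Type*} [NontriviallyNormedField 𝕜] (p : 𝕜[X]) (n : ℕ)
    (x : 𝕜) : iteratedDeriv n (fun t => p.eval t) x = (derivative^[n] p).eval x := by
  induction n generalizing x with
  | zero => simp
  | succ n ih =>
    rw [iteratedDeriv_succ, funext ih, Polynomial.deriv, Function.iterate_succ_apply']

theorem iteratedDeriv_polynomial_eval_zero {𝕜 : Type*} [NontriviallyNormedField 𝕜] (p : 𝕜[X])
    (n : ℕ) : iteratedDeriv n (fun t => p.eval t) 0 = n.factorial * p.coeff n := by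
  rw [iteratedDeriv_polynomial_eval, ← coeff_zero_eq_eval_zero, coeff_iterate_derivative, zero_add,
    Nat.descFactorial_self, nsmul_eq_mul]

theorem coeff_sum_C_mul_X_pow_pow {R ι : Type*} [CommSemiring R] [DecidableEq ι] (s : Finset ι)
    (a : ι → R) (d : ι → ℕ) (k n : ℕ) :
    ((∑ i ∈ s, C (a i) * X ^ d i) ^ k).coeff n =
      ∑ c ∈ piAntidiag s k with ∑ i ∈ s, d i * c i = n,
        Nat.multinomial s c * ∏ i ∈ s, a i ^ c i := by
  have monomial_eq (c : ι → ℕ) :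
      (Nat.multinomial s c : R[X]) * ∏ i ∈ s, (C (a i) * X ^ d i) ^ c i =
        C (Nat.multinomial s c * ∏ i ∈ s, a i ^ c i) * X ^ ∑ i ∈ s, d i * c i := by
    simp only [mul_pow, prod_mul_distrib, ← pow_mul, prod_pow_eq_pow_sum, map_mul, map_prod,
      map_pow, map_natCast, mul_assoc]
  simp only [sum_pow_eq_sum_piAntidiag, monomial_eq, finsetSum_coeff, coeff_C_mul_X_pow,
    sum_filter, eq_comm]

/-- The exponential generating polynomial `∑ y_i t^i / i!`, `1 ≤ i ≤ N`, of a sequence `y`: the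
polynomial without constant term whose first `N` derivatives at `0` are `y 1, …, y N`. -/
def expGenPoly (N : ℕ) (y : ℕ → ℝ) : ℝ[X] :=
  ∑ i : Fin N, C (y (i + 1) / (i + 1 : ℕ).factorial) * X ^ (i + 1 : ℕ)

theorem expGenPoly_eval_zero (N : ℕ) (y : ℕ → ℝ) : (expGenPoly N y).eval 0 = 0 := by
  simp [expGenPoly, eval_finsetSum]

theorem expGenPoly_one (y : ℕ → ℝ) : expGenPoly 1 y = C (y 1) * X := by
  simp [expGenPoly]

theorem coeff_expGenPoly {N j : ℕ} (y : ℕ → ℝ) (hj : 1 ≤ j) (hjN : j ≤ N) :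
    (expGenPoly N y).coeff j = y j / j.factorial := by
  obtain ⟨i, rfl⟩ := Nat.exists_eq_add_of_le' hj
  simp only [expGenPoly, finsetSum_coeff, coeff_C_mul_X_pow, Nat.add_right_cancel_iff]
  rw [Fintype.sum_eq_single (⟨i, hjN⟩ : Fin N) fun b hb => if_neg fun h => hb (Fin.ext h.symm)]
  simp

theorem iteratedDeriv_expGenPoly_zero {N j : ℕ} (y : ℕ → ℝ) (hj : 1 ≤ j) (hjN : j ≤ N) :
    iteratedDeriv j (fun t => (expGenPoly N y).eval t) 0 = y j := by
  rw [iteratedDeriv_polynomial_eval_zero, coeff_expGenPoly y hj hjN,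
    mul_div_cancel₀ _ (by positivity)]

end Polynomial

theorem bellPoly_eq_sum_piAntidiag (n k : ℕ) (y : ℕ → ℝ) :
    bellPoly n k y =
      ∑ c ∈ piAntidiag (univ : Finset (Fin (n - k + 1))) k with ∑ i, (i.1 + 1) * c i = n,
        (n.factorial : ℝ) / (∏ i, ((c i).factorial : ℝ)) *
          ∏ i, (y (i.1 + 1) / ((i.1 + 1).factorial : ℝ)) ^ c i := by
  refine sum_nbij (fun j i => (j i : ℕ)) ?_ ?_ ?_ fun _ _ => rfl
  · simp
  · exact fun j _ j' _ h => funext fun i => Fin.ext (congrFun h i)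
  · intro c hc
    simp only [coe_filter, mem_piAntidiag, mem_univ, implies_true, and_true,
      Set.mem_ofPred_eq] at hc
    have exponent_le (i) : c i ≤ n :=
      calc c i ≤ (i.1 + 1) * c i := Nat.le_mul_of_pos_left _ i.1.succ_pos
        _ ≤ ∑ i, (i.1 + 1) * c i :=
          single_le_sum (f := fun i => (i.1 + 1) * c i) (fun _ _ => Nat.zero_le _) (mem_univ i)
        _ = n := hc.2
    exact ⟨fun i => ⟨c i, Nat.lt_succ_of_le (exponent_le i)⟩, by simpa using hc, rfl⟩

theorem factorial_mul_bellPoly (n k : ℕ) (y : ℕ → ℝ) :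
    k.factorial * bellPoly n k y = n.factorial * (expGenPoly (n - k + 1) y ^ k).coeff n := by
  rw [bellPoly_eq_sum_piAntidiag, expGenPoly, coeff_sum_C_mul_X_pow_pow, mul_sum, mul_sum]
  refine sum_congr rfl fun c hc => ?_
  have sum_eq : ∑ i, c i = k := (mem_piAntidiag.1 (mem_filter.1 hc).1).1
  have multinomial_spec : (∏ i, ((c i).factorial : ℝ)) * Nat.multinomial univ c = k.factorial := by
    exact_mod_cast sum_eq ▸ Nat.multinomial_spec univ c
  have prod_ne_zero : (∏ i, ((c i).factorial : ℝ)) ≠ 0 := by positivity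
  rw [← multinomial_spec]
  field_simp

theorem bellPoly_eq_zero_of_lt {n k : ℕ} (h : n < k) (y : ℕ → ℝ) : bellPoly n k y = 0 := by
  refine sum_eq_zero fun j hj => absurd h (not_lt.2 ?_)
  obtain ⟨sum_eq, weighted_sum_eq⟩ := (mem_filter.1 hj).2
  calc k = ∑ i, (j i : ℕ) := sum_eq.symm
    _ ≤ ∑ i, (i.1 + 1) * (j i : ℕ) :=
      sum_le_sum fun i _ => Nat.le_mul_of_pos_left _ i.1.succ_pos
    _ = n := weighted_sum_eq

theorem bellPoly_self (k : ℕ) (y : ℕ → ℝ) : bellPoly k k y = y 1 ^ k := by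
  refine mul_left_cancel₀ (Nat.cast_ne_zero.2 k.factorial_ne_zero)
    ((factorial_mul_bellPoly k k y).trans ?_)
  rw [Nat.sub_self, zero_add, expGenPoly_one, mul_pow, ← Polynomial.C_pow,
    Polynomial.coeff_C_mul, Polynomial.coeff_X_pow_self, mul_one]

section FaaDiBruno

theorem sum_partSize_orderedFinpartition {n : ℕ} (c : OrderedFinpartition n) :
    ∑ i, c.partSize i = n := by
  simpa using Fintype.card_congr c.equivSigma

theorem partSize_le_sub_length_add_one {n : ℕ} (c : OrderedFinpartition n) (i : Fin c.length) :
    c.partSize i ≤ n - c.length + 1 := by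
  have other_parts : #(univ.erase i) ≤ ∑ j ∈ univ.erase i, c.partSize j := by
    simpa using card_nsmul_le_sum (univ.erase i) c.partSize 1 fun j _ => c.partSize_pos j
  have total := add_sum_erase univ c.partSize (mem_univ i)
  rw [sum_partSize_orderedFinpartition] at total
  rw [card_erase_of_mem (mem_univ i), card_univ, Fintype.card_fin] at other_parts
  omega

/- Apply Mathlib's Faà di Bruno formula to `t ↦ G(t) ^ k` at `0`, where `G` is the exponential
generating polynomial of `y`: as `G(0) = 0`, only the partitions with exactly `k` parts survive. -/
theorem sum_orderedFinpartition_prod_partSize (n k : ℕ) (y : ℕ → ℝ) :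
    ∑ c : OrderedFinpartition n with c.length = k, ∏ i, y (c.partSize i) = bellPoly n k y := by
  set G := expGenPoly (n - k + 1) y
  have iteratedDeriv_G (c : OrderedFinpartition n) (hc : c.length = k) (i : Fin c.length) :
      iteratedDeriv (c.partSize i) (fun t => G.eval t) 0 = y (c.partSize i) :=
    iteratedDeriv_expGenPoly_zero y (c.partSize_pos i) (hc ▸ partSize_le_sub_length_add_one c i)
  have faaDiBruno : iteratedDeriv n ((· ^ k) ∘ fun t => G.eval t) 0 =
      ∑ c : OrderedFinpartition n, iteratedDeriv c.length (· ^ k) (G.eval 0) *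
        ∏ i, iteratedDeriv (c.partSize i) (fun t => G.eval t) 0 :=
    iteratedDeriv_comp_eq_sum_orderedFinpartition (contDiff_id.pow k).contDiffAt
      (G.contDiff_aeval n).contDiffAt le_rfl
  refine mul_left_cancel₀ (Nat.cast_ne_zero.2 k.factorial_ne_zero : (k.factorial : ℝ) ≠ 0) ?_
  calc (k.factorial : ℝ) * ∑ c : OrderedFinpartition n with c.length = k, ∏ i, y (c.partSize i)
    _ = ∑ c : OrderedFinpartition n, iteratedDeriv c.length (· ^ k) (G.eval 0) *
        ∏ i, iteratedDeriv (c.partSize i) (fun t => G.eval t) 0 := by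
      rw [mul_sum, sum_filter]
      refine sum_congr rfl fun c _ => ?_
      rw [expGenPoly_eval_zero, iteratedDeriv_fun_pow_zero]
      split_ifs with hc
      · simp only [iteratedDeriv_G c hc]
      · simp
    _ = iteratedDeriv n (fun t => (G ^ k).eval t) 0 := by
      simp only [← faaDiBruno, Polynomial.eval_pow, Function.comp_def]
    _ = k.factorial * bellPoly n k y := by
      rw [iteratedDeriv_polynomial_eval_zero, factorial_mul_bellPoly]

variable {E : Type*} [NormedAddCommGroup E] [NormedSpace ℝ E] {f : ℝ → E} {g : ℝ → ℝ} {x : ℝ}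

theorem iteratedDeriv_comp_eq_sum_bellPoly {n : ℕ} (hn : 1 ≤ n) (hf : ContDiffAt ℝ n f (g x))
    (hg : ContDiffAt ℝ n g x) :
    iteratedDeriv n (f ∘ g) x =
      ∑ k ∈ Icc 1 n, bellPoly n k (fun i => iteratedDeriv i g x) • iteratedDeriv k f (g x) := by
  have length_mem (c : OrderedFinpartition n) : c.length ∈ Icc 1 n :=
    mem_Icc.2 ⟨c.length_pos hn, c.length_le⟩
  rw [iteratedDeriv_scomp_eq_sum_orderedFinpartition hf hg le_rfl,
    ← sum_fiberwise_of_maps_to fun c _ => length_mem c]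
  refine sum_congr rfl fun k _ => ?_
  rw [← sum_orderedFinpartition_prod_partSize, sum_smul]
  refine sum_congr rfl fun c hc => ?_
  obtain rfl : c.length = k := (mem_filter.1 hc).2
  rfl

theorem sum_smul_iteratedDeriv_comp {m : ℕ} (hf : ContDiffAt ℝ m f (g x))
    (hg : ContDiffAt ℝ m g x) (P : ℕ → ℝ) :
    ∑ n ∈ Icc 1 m, P n • iteratedDeriv n (f ∘ g) x =
      ∑ k ∈ Icc 1 m, (∑ n ∈ Icc k m, P n * bellPoly n k (fun i => iteratedDeriv i g x)) •
        iteratedDeriv k f (g x) := by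
  have expand : ∀ n ∈ Icc 1 m, P n • iteratedDeriv n (f ∘ g) x =
      ∑ k ∈ Icc 1 n, (P n * bellPoly n k (fun i => iteratedDeriv i g x)) •
        iteratedDeriv k f (g x) := by
    intro n hn
    obtain ⟨one_le, le_m⟩ := mem_Icc.1 hn
    have le_m' : (n : WithTop ℕ∞) ≤ m := mod_cast le_m
    rw [iteratedDeriv_comp_eq_sum_bellPoly one_le (hf.of_le le_m') (hg.of_le le_m'), smul_sum]
    simp only [mul_smul]
  rw [sum_congr rfl expand]
  simp only [sum_smul]
  refine sum_comm' fun n k => ?_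
  simp only [mem_Icc]
  omega

end FaaDiBruno

section LinearSystem

open Matrix

/-- The matrix of the linear system `∑ n, P n * B_{n,k}(y) = b k` in the unknowns `P`, with rows
indexed by `k` and columns by `n`, both running through `1, …, m`. -/
def bellMatrix (m : ℕ) (y : ℕ → ℝ) : Matrix (Icc 1 m) (Icc 1 m) ℝ :=
  of fun k n => bellPoly n k y

theorem bellMatrix_mulVec {m : ℕ} (y P : ℕ → ℝ) (k : Icc 1 m) :
    (bellMatrix m y *ᵥ fun n => P n) k = ∑ n ∈ Icc k.1 m, P n * bellPoly n k y := by
  have sum_Icc_one : (bellMatrix m y *ᵥ fun n => P n) k = ∑ n ∈ Icc 1 m, P n * bellPoly n k y := by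
    simp only [mulVec, dotProduct, bellMatrix, of_apply, mul_comm (bellPoly _ _ _)]
    exact sum_coe_sort (Icc 1 m) fun n => P n * bellPoly n k y
  rw [sum_Icc_one]
  refine (sum_subset (Icc_subset_Icc_left (mem_Icc.1 k.2).1) fun n hn hnk => ?_).symm
  rw [bellPoly_eq_zero_of_lt (by simp only [mem_Icc] at hn hnk; omega), mul_zero]

theorem isUnit_bellMatrix (m : ℕ) {y : ℕ → ℝ} (hy : y 1 ≠ 0) : IsUnit (bellMatrix m y) := by
  have upperTriangular : (bellMatrix m y).IsUpperTriangular :=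
    fun _ _ h => bellPoly_eq_zero_of_lt h y
  rw [isUnit_iff_isUnit_det, det_of_isUpperTriangular upperTriangular, isUnit_iff_ne_zero]
  simp only [bellMatrix, of_apply, bellPoly_self]
  exact prod_ne_zero_iff.2 fun k _ => pow_ne_zero _ hy

theorem exists_eq_sum_mul_bellPoly (m : ℕ) {y : ℕ → ℝ} (hy : y 1 ≠ 0) (b : ℕ → ℝ) :
    ∃ P : ℕ → ℝ, ∀ k ∈ Icc 1 m, b k = ∑ n ∈ Icc k m, P n * bellPoly n k y := by
  obtain ⟨v, hv⟩ := mulVec_surjective_iff_isUnit.2 (isUnit_bellMatrix m hy) fun k => b k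
  obtain ⟨P, rfl⟩ := Subtype.exists_pi_extension (α := fun _ => ℝ) v
  exact ⟨P, fun k hk => by rw [← bellMatrix_mulVec y P ⟨k, hk⟩, hv]⟩

theorem eq_of_sum_mul_bellPoly_eq {m : ℕ} {y P Q : ℕ → ℝ} (hy : y 1 ≠ 0)
    (h : ∀ k ∈ Icc 1 m,
      ∑ n ∈ Icc k m, P n * bellPoly n k y = ∑ n ∈ Icc k m, Q n * bellPoly n k y) :
    ∀ k ∈ Icc 1 m, P k = Q k := by
  have mulVec_eq : (bellMatrix m y *ᵥ fun n => P n) = bellMatrix m y *ᵥ fun n => Q n :=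
    funext fun k => by rw [bellMatrix_mulVec, bellMatrix_mulVec, h k k.2]
  exact fun k hk => congrFun (mulVec_injective_of_isUnit (isUnit_bellMatrix m hy) mulVec_eq) ⟨k, hk⟩

end LinearSystem

theorem triangular_system_general {E : Type*} [NormedAddCommGroup E] [NormedSpace ℝ E]
    {l l' : Filter ℝ} (m : ℕ) (f : ℝ → E) (g : ℝ → ℝ) (p : ℕ → ℝ → ℝ)
    (hf : ∀ᶠ t in l', ContDiffAt ℝ m f t)
    (hg : ∀ᶠ x in l, ContDiffAt ℝ m g x)
    (hgl : Tendsto g l l')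
    (heq : ∀ᶠ t in l', f t = ∑ k ∈ Icc 1 m, p k t • iteratedDeriv k f t) :
    (∀ P : ℕ → ℝ → ℝ,
      (∀ᶠ x in l, ∀ k ∈ Icc 1 m,
        p k (g x) = ∑ n ∈ Icc k m, P n x * bellPoly n k (fun i => iteratedDeriv i g x)) →
      ∀ᶠ x in l, f (g x) = ∑ n ∈ Icc 1 m, P n x • iteratedDeriv n (fun t => f (g t)) x) ∧
    ((∀ᶠ x in l, deriv g x ≠ 0) →
      (∃ P : ℕ → ℝ → ℝ, ∀ᶠ x in l, ∀ k ∈ Icc 1 m,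
        p k (g x) = ∑ n ∈ Icc k m, P n x * bellPoly n k (fun i => iteratedDeriv i g x)) ∧
      (∀ P Q : ℕ → ℝ → ℝ,
        (∀ᶠ x in l, ∀ k ∈ Icc 1 m,
          p k (g x) = ∑ n ∈ Icc k m, P n x * bellPoly n k (fun i => iteratedDeriv i g x)) →
        (∀ᶠ x in l, ∀ k ∈ Icc 1 m,
          p k (g x) = ∑ n ∈ Icc k m, Q n x * bellPoly n k (fun i => iteratedDeriv i g x)) →
        ∀ k ∈ Icc 1 m, ∀ᶠ x in l, P k x = Q k x)) := by
  simp only [← iteratedDeriv_one (f := g)]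
  refine ⟨fun P hP => ?_, fun hg' => ⟨?_, fun P Q hP hQ k hk => ?_⟩⟩
  · filter_upwards [hP, hgl.eventually heq, hgl.eventually hf, hg] with x hPx hfx hf_at hg_at
    rw [hfx, ← Function.comp_def f g, sum_smul_iteratedDeriv_comp hf_at hg_at fun n => P n x]
    exact sum_congr rfl fun k hk => by rw [hPx k hk]
  · obtain ⟨P, hP⟩ := skolem.1 (hg'.mono fun x hx =>
      exists_eq_sum_mul_bellPoly m (y := fun i => iteratedDeriv i g x) hx fun k => p k (g x))
    exact ⟨fun n x => P x n, hP⟩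
  · filter_upwards [hP, hQ, hg'] with x hPx hQx hx
    exact eq_of_sum_mul_bellPoly_eq hx (fun k hk => (hPx k hk).symm.trans (hQx k hk)) k hk

/-- if `f` is `m` times continuously differentiable and satisfies
`f(t) = Σ_{k=1}^m p_k(t) f^{(k)}(t)` for all large `t`, `g` is infinitely differentiable for
all large `x` with `g(x) → +∞`, and `P_1, …, P_m` satisfy the upper triangular system
`p_k(g(x)) = Σ_{n=k}^m P_n(x) B_{n,k}(g'(x), …, g^{(n−k+1)}(x))`, `k = 1, …, m`, for all
large `x`, then `φ = f ∘ g` satisfies `φ(x) = Σ_{n=1}^m P_n(x) φ^{(n)}(x)` for all large `x`.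
Moreover, if `g'(x) > 0` for all large `x`, then such `P_1, …, P_m` exist and are uniquely
determined for all large `x`. -/
theorem triangular_system (m : ℕ) (hm : 0 < m) (f g : ℝ → ℝ) (p : ℕ → ℝ → ℝ)
    (hf : ContDiff ℝ (m : ℕ∞) f)
    (hg : ∀ᶠ x in atTop, ContDiffAt ℝ (⊤ : ℕ∞) g x)
    (hgtop : Tendsto g atTop atTop)
    (heq : ∀ᶠ t in atTop, f t = ∑ k ∈ Finset.Icc 1 m, p k t * iteratedDeriv k f t) :
    (∀ P : ℕ → ℝ → ℝ,
      (∀ᶠ x in atTop, ∀ k ∈ Finset.Icc 1 m,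
        p k (g x) =
          ∑ n ∈ Finset.Icc k m, P n x * bellPoly n k (fun i => iteratedDeriv i g x)) →
      ∀ᶠ x in atTop,
        f (g x) = ∑ n ∈ Finset.Icc 1 m, P n x * iteratedDeriv n (fun t => f (g t)) x) ∧
    ((∀ᶠ x in atTop, 0 < deriv g x) →
      (∃ P : ℕ → ℝ → ℝ, ∀ᶠ x in atTop, ∀ k ∈ Finset.Icc 1 m,
        p k (g x) =
          ∑ n ∈ Finset.Icc k m, P n x * bellPoly n k (fun i => iteratedDeriv i g x)) ∧
      (∀ P Q : ℕ → ℝ → ℝ,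
        (∀ᶠ x in atTop, ∀ k ∈ Finset.Icc 1 m,
          p k (g x) =
            ∑ n ∈ Finset.Icc k m, P n x * bellPoly n k (fun i => iteratedDeriv i g x)) →
        (∀ᶠ x in atTop, ∀ k ∈ Finset.Icc 1 m,
          p k (g x) =
            ∑ n ∈ Finset.Icc k m, Q n x * bellPoly n k (fun i => iteratedDeriv i g x)) →
        ∀ k ∈ Finset.Icc 1 m, ∀ᶠ x in atTop, P k x = Q k x)) := by
  have general := triangular_system_general m f g p (.of_forall fun _ => hf.contDiffAt)
    (hg.mono fun _ hx => hx.of_le (mod_cast le_top)) hgtop heq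
  exact ⟨general.1, fun hg' => general.2 (hg'.mono fun _ hx => hx.ne')⟩
end
end
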